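/- arXiv:1306.5258 — 4 statements merged into one kernel-verified Lean document; each statement's English description precedes it below -/
import Mathlib

section
/- Let Y be a countable complete metric space, (T, 𝒯, λ) an atomless probability space, and F : T → 2^Y a measurable correspondence with nonempty values. Then the set D_F = { λ ∘ f⁻¹ : f is a measurable selection of F } of pushforward distributions of measurable selections of F is nonempty and convex in the space M(Y) of Borel probability measures on Y. -/
/-!
Measurable selections exist because `Y` is countable: after enumerating `Y`, let `f t` be the point
of `F t` of least index; every set `{t | y ∈ F t}` is measurable since singletons are closed.

For convexity, let `f₁, f₂` be selections and `0 ≤ r ≤ 1`. The atoms `{f₁ = y₁, f₂ = y₂}` form a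
countable measurable partition of `T`. Since `lam` is atomless, each of them contains a measurable
part carrying exactly the proportion `r` of its measure (Sierpiński's theorem,
`exists_subset_measure_eq`). The union `S` of these parts is independent of the pair `(f₁, f₂)` and
has measure `r` (`exists_set_inter_preimage`). The selection equal to `f₁` on `S` and to `f₂` off `S`
then has distribution `r ν₁ + (1 - r) ν₂`.
-/

open MeasureTheory
open scoped NNReal

/-- The probability space `(T, 𝒯, lam)` is atomless. -/
def AtomlessMeasure {T : Type*} [MeasurableSpace T] (lam : Measure T) : Prop :=
  ∀ s : Set T, MeasurableSet s → 0 < lam s →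
    ∃ u, u ⊆ s ∧ MeasurableSet u ∧ 0 < lam u ∧ lam u < lam s

/-- The set of distributions `lam ∘ f⁻¹` of measurable (a.e.) selections `f` of `F`. -/
def distrOfSelections {T Y : Type*} [MeasurableSpace T] [MeasurableSpace Y]
    [TopologicalSpace Y] (lam : Measure T) [IsProbabilityMeasure lam]
    (F : T → Set Y) : Set (ProbabilityMeasure Y) :=
  {ν | ∃ f : T → Y, Measurable f ∧ (∀ᵐ t ∂lam, f t ∈ F t) ∧
        (ν : Measure Y) = lam.map f}

open scoped ENNReal

/-- An atomless finite measure takes arbitrarily small positive values on subsets of any set of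
positive measure: one of the two pieces of a nontrivial splitting has at most half the measure. -/
lemma exists_subset_small {T : Type*} [MeasurableSpace T] (lam : Measure T)
    [IsFiniteMeasure lam] (hat : AtomlessMeasure lam) (s : Set T) (hs : MeasurableSet s)
    (hpos : 0 < lam s) (ε : ℝ≥0∞) (hε : 0 < ε) :
    ∃ u, u ⊆ s ∧ MeasurableSet u ∧ 0 < lam u ∧ lam u ≤ ε := by
  have half : ∀ v : Set T, MeasurableSet v → 0 < lam v →
      ∃ u, u ⊆ v ∧ MeasurableSet u ∧ 0 < lam u ∧ 2 * lam u ≤ lam v := by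
    intro v hv hvpos
    obtain ⟨u, huv, hu, hu0, hlt⟩ := hat v hv hvpos
    have hadd : lam u + lam (v \ u) = lam v := by
      rw [← measure_inter_add_sdiff v hu, Set.inter_eq_self_of_subset_right huv]
    rcases le_total (lam u) (lam (v \ u)) with h | h
    · refine ⟨u, huv, hu, hu0, ?_⟩
      rw [two_mul, ← hadd]
      gcongr
    · refine ⟨v \ u, Set.sdiff_subset, hv.diff hu, ?_, ?_⟩
      · rw [pos_iff_ne_zero]
        intro h0
        rw [h0, add_zero] at hadd
        exact hlt.ne hadd
      · rw [two_mul, ← hadd]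
        gcongr
  have iter : ∀ n : ℕ, ∃ u, u ⊆ s ∧ MeasurableSet u ∧ 0 < lam u ∧ 2 ^ n * lam u ≤ lam s := by
    intro n
    induction n with
    | zero => exact ⟨s, subset_rfl, hs, hpos, by simp⟩
    | succ n ih =>
      obtain ⟨v, hvs, hv, hv0, hle⟩ := ih
      obtain ⟨u, huv, hu, hu0, hle'⟩ := half v hv hv0
      refine ⟨u, huv.trans hvs, hu, hu0, le_trans ?_ hle⟩
      rw [pow_succ, mul_assoc]
      gcongr
  obtain ⟨n, hn⟩ := ENNReal.exists_nat_mul_gt hε.ne' (measure_ne_top lam s)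
  obtain ⟨u, hus, hu, hu0, hle⟩ := iter n
  refine ⟨u, hus, hu, hu0, ?_⟩
  by_contra! hlt
  refine absurd hn (not_lt.2 (le_trans ?_ hle))
  have : (n : ℝ≥0∞) ≤ 2 ^ n := by exact_mod_cast n.lt_two_pow_self.le
  gcongr

/-- Sierpiński's theorem: an atomless finite measure takes all intermediate values. The subset is
exhausted greedily, adding at each stage a set at least half as large as the largest one
that keeps the total measure at most `c`. -/
lemma exists_subset_measure_eq {T : Type*} [MeasurableSpace T] (lam : Measure T)
    [IsFiniteMeasure lam] (hat : AtomlessMeasure lam) (s : Set T) (hs : MeasurableSet s)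
    (c : ℝ≥0∞) (hc : c ≤ lam s) :
    ∃ u, u ⊆ s ∧ MeasurableSet u ∧ lam u = c := by
  have hctop : c ≠ ∞ := (hc.trans_lt (measure_lt_top lam s)).ne
  have step : ∀ A : Set T, ∃ B, (MeasurableSet B ∧ B ⊆ s \ A ∧ lam B ≤ c - lam A) ∧
      ∀ B', MeasurableSet B' → B' ⊆ s \ A → lam B' ≤ c - lam A → lam B' ≤ 2 * lam B := by
    intro A
    by_contra! hcon
    -- Otherwise the admissible sets, starting from a nonnull one, could double indefinitely.
    obtain ⟨B₀, h1, h2, h3, h4⟩ := hcon ∅ ⟨.empty, by simp, by simp⟩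
    rw [measure_empty, mul_zero] at h4
    have : ∀ n : ℕ, ∃ B, (MeasurableSet B ∧ B ⊆ s \ A ∧ lam B ≤ c - lam A) ∧
        2 ^ n * lam B₀ ≤ lam B := by
      intro n
      induction n with
      | zero => exact ⟨B₀, ⟨h1, h2, h3⟩, by simp⟩
      | succ n ih =>
        obtain ⟨B, hB, hle⟩ := ih
        obtain ⟨B', g1, g2, g3, g4⟩ := hcon B hB
        refine ⟨B', ⟨g1, g2, g3⟩, le_trans ?_ g4.le⟩
        rw [pow_succ', mul_assoc]
        gcongr
    obtain ⟨n, hn⟩ := ENNReal.exists_nat_mul_gt h4.ne' hctop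
    obtain ⟨B, ⟨-, -, hB⟩, hle⟩ := this n
    refine absurd hn (not_lt.2 (le_trans ?_ (hle.trans (hB.trans tsub_le_self))))
    have : (n : ℝ≥0∞) ≤ 2 ^ n := by exact_mod_cast n.lt_two_pow_self.le
    gcongr
  choose g hg hmax using step
  let A : ℕ → Set T := fun n => Nat.rec ∅ (fun _ X => X ∪ g X) n
  have hA0 : A 0 = ∅ := rfl
  have hAs : ∀ n, A (n + 1) = A n ∪ g (A n) := fun n => rfl
  have hadd : ∀ n, lam (A (n + 1)) = lam (A n) + lam (g (A n)) := by
    intro n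
    rw [hAs, measure_union _ (hg _).1]
    exact Set.disjoint_left.2 fun x hx hx' => ((hg _).2.1 hx').2 hx
  have hA : ∀ n, MeasurableSet (A n) ∧ A n ⊆ s ∧ lam (A n) ≤ c := by
    intro n
    induction n with
    | zero => simp [hA0]
    | succ n ih =>
      obtain ⟨h1, h2, h3⟩ := ih
      refine ⟨h1.union (hg _).1, Set.union_subset h2 ((hg _).2.1.trans Set.sdiff_subset), ?_⟩
      rw [hadd]
      calc lam (A n) + lam (g (A n)) ≤ lam (A n) + (c - lam (A n)) := by
            gcongr
            exact (hg _).2.2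
        _ = c := add_tsub_cancel_of_le h3
  have hmono : Monotone A := monotone_nat_of_le_succ fun n => Set.subset_union_left
  have hUm : MeasurableSet (⋃ n, A n) := .iUnion fun n => (hA n).1
  have hUs : (⋃ n, A n) ⊆ s := Set.iUnion_subset fun n => (hA n).2.1
  have hUc : lam (⋃ n, A n) ≤ c := by
    rw [hmono.measure_iUnion]
    exact iSup_le fun n => (hA n).2.2
  refine ⟨⋃ n, A n, hUs, hUm, hUc.eq_of_not_lt fun hlt => ?_⟩
  have hrest : 0 < lam (s \ ⋃ n, A n) := by
    rw [measure_sdiff hUs hUm.nullMeasurableSet (measure_ne_top _ _)]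
    exact tsub_pos_of_lt (hlt.trans_le hc)
  obtain ⟨B, hBs, hB, hB0, hBc⟩ :=
    exists_subset_small lam hat _ (hs.diff hUm) hrest _ (tsub_pos_of_lt hlt)
  -- `B` stays admissible at every stage, so each stage adds at least `lam B / 2`.
  have hBn : ∀ n, lam B ≤ 2 * lam (g (A n)) := fun n =>
    hmax _ B hB (hBs.trans (Set.sdiff_subset_sdiff_right (Set.subset_iUnion A n)))
      (hBc.trans (tsub_le_tsub_left (measure_mono (Set.subset_iUnion A n)) c))
  have hgrow : ∀ n : ℕ, n * lam B ≤ 2 * lam (A n) := by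
    intro n
    induction n with
    | zero => simp
    | succ n ih =>
      rw [hadd, mul_add, Nat.cast_succ, add_mul, one_mul]
      exact add_le_add ih (hBn n)
  obtain ⟨n, hn⟩ := ENNReal.exists_nat_mul_gt hB0.ne' (ENNReal.mul_ne_top ENNReal.ofNat_ne_top hctop :
    2 * c ≠ ∞)
  refine absurd hn (not_lt.2 ((hgrow n).trans ?_))
  gcongr
  exact (hA n).2.2

/-- On an atomless space there is an event that is independent of a given countably valued
random variable and has prescribed probability `r`. -/
lemma exists_set_inter_preimage {T Z : Type*} [MeasurableSpace T] [MeasurableSpace Z]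
    [Countable Z] [MeasurableSingletonClass Z] (lam : Measure T) [IsFiniteMeasure lam]
    (hat : AtomlessMeasure lam) (g : T → Z) (hg : Measurable g) (r : ℝ≥0∞) (hr : r ≤ 1) :
    ∃ S, MeasurableSet S ∧ ∀ C : Set Z, lam (g ⁻¹' C ∩ S) = r * lam (g ⁻¹' C) := by
  have key : ∀ z, ∃ u, u ⊆ g ⁻¹' {z} ∧ MeasurableSet u ∧ lam u = r * lam (g ⁻¹' {z}) := fun z =>
    exists_subset_measure_eq lam hat _ (hg (measurableSet_singleton z)) _ (mul_le_of_le_one_left' hr)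
  choose u hus hu hlam using key
  have hgu : ∀ z, ∀ t ∈ u z, g t = z := fun z t ht => hus z ht
  refine ⟨⋃ z, u z, .iUnion hu, fun C => ?_⟩
  have h1 : g ⁻¹' C ∩ ⋃ z, u z = ⋃ z ∈ C, u z := by
    ext t
    simp only [Set.mem_inter_iff, Set.mem_preimage, Set.mem_iUnion, exists_prop]
    constructor
    · rintro ⟨hC, z, hz⟩
      exact ⟨z, hgu z t hz ▸ hC, hz⟩
    · rintro ⟨z, hC, hz⟩
      exact ⟨(hgu z t hz).symm ▸ hC, z, hz⟩
  have h2 : g ⁻¹' C = ⋃ z ∈ C, g ⁻¹' {z} := by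
    rw [← Set.preimage_iUnion₂, Set.biUnion_of_singleton]
  have hdisj : C.PairwiseDisjoint fun z => g ⁻¹' {z} := fun a _ b _ hab =>
    Disjoint.preimage g (Set.disjoint_singleton.2 hab)
  rw [h1, h2, measure_biUnion C.to_countable hdisj fun z _ => hg (measurableSet_singleton z),
    measure_biUnion C.to_countable (hdisj.mono hus) fun z _ => hu z, ← ENNReal.tsum_mul_left]
  simp only [hlam]

/-- A correspondence into a countable metric space has a measurable selection: choose the
point of `F t` of least index in an enumeration. -/
lemma exists_measurable_selection {T Y : Type*} [MeasurableSpace T] [MetricSpace Y] [Countable Y]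
    [MeasurableSpace Y] [BorelSpace Y] (F : T → Set Y) (hne : ∀ t, (F t).Nonempty)
    (hmeas : ∀ C : Set Y, IsClosed C → MeasurableSet {t : T | (F t ∩ C).Nonempty}) :
    ∃ f : T → Y, Measurable f ∧ ∀ t, f t ∈ F t := by
  classical
  rcases isEmpty_or_nonempty T with hT | ⟨⟨t₀⟩⟩
  · exact ⟨fun t => hT.elim t, measurable_of_empty _, fun t => hT.elim t⟩
  have : Nonempty Y := ⟨(hne t₀).some⟩
  obtain ⟨e, he⟩ := exists_surjective_nat Y
  have hex : ∀ t, ∃ n, e n ∈ F t := fun t => by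
    obtain ⟨y, hy⟩ := hne t
    obtain ⟨n, rfl⟩ := he y
    exact ⟨n, hy⟩
  refine ⟨fun t => e (Nat.find (hex t)), ?_, fun t => Nat.find_spec (hex t)⟩
  refine (measurable_from_nat (f := e)).comp (measurable_find hex fun n => ?_)
  simpa [Set.inter_singleton_nonempty] using hmeas {e n} isClosed_singleton

theorem stmt_5 {T Y : Type*} [MeasurableSpace T]
    [MetricSpace Y] [Countable Y] [CompleteSpace Y] [MeasurableSpace Y] [BorelSpace Y]
    (lam : Measure T) [IsProbabilityMeasure lam] (hatomless : AtomlessMeasure lam)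
    (F : T → Set Y) (hne : ∀ t, (F t).Nonempty)
    (hmeas : ∀ C : Set Y, IsClosed C → MeasurableSet {t : T | (F t ∩ C).Nonempty}) :
    (distrOfSelections lam F).Nonempty ∧
      ∀ ν₁ ∈ distrOfSelections lam F, ∀ ν₂ ∈ distrOfSelections lam F,
        ∀ r : ℝ≥0, r ≤ 1 →
          ∃ ν ∈ distrOfSelections lam F,
            (ν : Measure Y) = r • (ν₁ : Measure Y) + (1 - r) • (ν₂ : Measure Y) := by
  classical
  constructor
  · obtain ⟨f, hf, hfF⟩ := exists_measurable_selection F hne hmeas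
    exact ⟨⟨lam.map f, Measure.isProbabilityMeasure_map hf.aemeasurable⟩, f, hf,
      Filter.Eventually.of_forall hfF, rfl⟩
  · rintro ν₁ ⟨f₁, hf₁, hF₁, hν₁⟩ ν₂ ⟨f₂, hf₂, hF₂, hν₂⟩ r hr
    have hr' : (r : ℝ≥0∞) ≤ 1 := by exact_mod_cast hr
    obtain ⟨S, hS, hind⟩ := exists_set_inter_preimage lam hatomless (fun t => (f₁ t, f₂ t))
      (hf₁.prodMk hf₂) r hr'
    have h1 : ∀ B : Set Y, lam (f₁ ⁻¹' B ∩ S) = r * lam (f₁ ⁻¹' B) := fun B =>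
      hind (Prod.fst ⁻¹' B)
    have h2 : ∀ B : Set Y, lam (f₂ ⁻¹' B \ S) = (1 - r) * lam (f₂ ⁻¹' B) := by
      intro B
      have h : lam (f₂ ⁻¹' B ∩ S) = r * lam (f₂ ⁻¹' B) := hind (Prod.snd ⁻¹' B)
      have hadd := measure_inter_add_sdiff (μ := lam) (f₂ ⁻¹' B) hS
      rw [ENNReal.sub_mul fun _ _ => measure_ne_top _ _, one_mul, ← h]
      exact ENNReal.eq_sub_of_add_eq' (measure_ne_top _ _) (by rw [add_comm]; exact hadd)
    have hf : Measurable (S.piecewise f₁ f₂) := hf₁.piecewise hS hf₂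
    refine ⟨⟨lam.map (S.piecewise f₁ f₂), Measure.isProbabilityMeasure_map hf.aemeasurable⟩,
      ⟨_, hf, ?_, rfl⟩, ?_⟩
    · filter_upwards [hF₁, hF₂] with t ht₁ ht₂
      by_cases ht : t ∈ S <;> simp [ht, ht₁, ht₂]
    · ext B hB
      rw [hν₁, hν₂, ProbabilityMeasure.coe_mk, Measure.map_apply hf hB, Measure.add_apply,
        Measure.smul_apply, Measure.smul_apply, Measure.map_apply hf₁ hB, Measure.map_apply hf₂ hB,
        ← measure_inter_add_sdiff _ hS]
      have e1 : S.piecewise f₁ f₂ ⁻¹' B ∩ S = f₁ ⁻¹' B ∩ S := by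
        ext t
        by_cases ht : t ∈ S <;> simp [ht]
      have e2 : S.piecewise f₁ f₂ ⁻¹' B \ S = f₂ ⁻¹' B \ S := by
        ext t
        by_cases ht : t ∈ S <;> simp [ht]
      rw [e1, e2, h1, h2, ENNReal.smul_def, ENNReal.smul_def, ENNReal.coe_sub, ENNReal.coe_one,
        smul_eq_mul, smul_eq_mul]
end

section
/- Let Y be a countable complete metric space, (T, 𝒯, λ) an atomless probability space, and F : T → 2^Y a measurable correspondence with nonempty compact values. Then D_F = { λ ∘ f⁻¹ : f a measurable selection of F } is compact in M(Y), the space of Borel probability measures on Y equipped with the topology of weak convergence. -/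
/-!
The set of distributions is exhibited as the continuous image of a compact set of couplings.

Record which closed balls `closedBall y (1 / (k + 1))`, `y : Y`, `k : ℕ`, meet `F t` as a point
`φ t` of the compact metrizable space `Y × ℕ → Bool`. Since the values of `F` are closed,
`y ∈ F t` is equivalent to `(φ t, y) ∈ G` for a certain closed set `G`. Let `W` be the set of
probability measures on `(Y × ℕ → Bool) × Y` which are supported on `G`, have the law of `φ` as
first marginal, and satisfy the uniform tightness bound that compactness of the values of `F`
imposes on selections (`exists_isCompact_forall_selection`). By Prokhorov's theorem `W` is compact,
so its image under the second marginal is compact, and this image is the set of distributions of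
selections.

If `f` is a selection, the law of `(φ, f)` lies in `W`. Conversely, disintegrating an element of `W`
along `φ` gives a random selection `t ↦ κ (φ t)` of `F` with the prescribed distribution, which must
be replaced by a deterministic one. This is `FractionalAssignment.exists_pure`: since `Y` is
countable and `lam` atomless, one runs through the pairs `(y, z)` and exchanges mass so that the
supports of the densities `t ↦ κ (φ t) {y}` and `t ↦ κ (φ t) {z}` become disjoint, keeping their
integrals and never enlarging a support. Each exchange uses Sierpiński's theorem on the
intermediate values of an atomless measure (`AtomlessMeasure.exists_measure_eq`).
-/


open MeasureTheory

open Set Filter Topology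
open scoped ENNReal NNReal ProbabilityTheory

/-! ### Intermediate values of atomless measures -/

/-- An atomless finite measure charges arbitrarily small positive masses inside any set of positive
measure: of the two parts of a nontrivial splitting, one has at most half the mass. -/
lemma AtomlessMeasure.exists_small {T : Type*} [MeasurableSpace T] {m : Measure T}
    [IsFiniteMeasure m] (hm : AtomlessMeasure m) {S : Set T} (hS : MeasurableSet S)
    (h0 : 0 < m S) {δ : ℝ≥0∞} (hδ : 0 < δ) :
    ∃ D ⊆ S, MeasurableSet D ∧ 0 < m D ∧ m D ≤ δ := by
  have half : ∀ n : ℕ, ∃ D ⊆ S, MeasurableSet D ∧ 0 < m D ∧ m D ≤ m S * (2⁻¹ : ℝ≥0∞) ^ n := by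
    intro n
    induction n with
    | zero => exact ⟨S, Subset.rfl, hS, h0, by simp⟩
    | succ n ih =>
      obtain ⟨D, hDS, hD, hD0, hDn⟩ := ih
      obtain ⟨u, huD, hu, hu0, hult⟩ := hm D hD hD0
      have hadd : m u + m (D \ u) = m D := by rw [measure_add_sdiff hu.nullMeasurableSet, union_eq_self_of_subset_left huD]
      have key : ∀ a b : ℝ≥0∞, a ≤ b → a + b = m D → a ≤ m S * (2⁻¹ : ℝ≥0∞) ^ (n + 1) := by
        intro a b hab h
        have h2 : 2 * a ≤ m S * (2⁻¹ : ℝ≥0∞) ^ n := by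
          rw [two_mul]; exact (add_le_add_right hab a).trans (h.le.trans hDn)
        calc a = 2⁻¹ * (2 * a) := by
              rw [← mul_assoc, ENNReal.inv_mul_cancel (by simp) (by simp), one_mul]
          _ ≤ 2⁻¹ * (m S * (2⁻¹ : ℝ≥0∞) ^ n) := by gcongr
          _ = _ := by rw [pow_succ]; ring
      rcases le_total (m u) (m (D \ u)) with h | h
      · exact ⟨u, huD.trans hDS, hu, hu0, key _ _ h hadd⟩
      · refine ⟨D \ u, sdiff_subset.trans hDS, hD.diff hu, ?_, key _ _ h (by rw [add_comm]; exact hadd)⟩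
        rw [pos_iff_ne_zero]
        intro h0
        rw [h0, add_zero] at hadd
        exact hult.ne hadd
  have hlim : Tendsto (fun n : ℕ => m S * (2⁻¹ : ℝ≥0∞) ^ n) atTop (𝓝 0) := by
    have := ENNReal.Tendsto.const_mul (a := m S)
      (ENNReal.tendsto_pow_atTop_nhds_zero_of_lt_one (r := 2⁻¹) (by simp))
      (Or.inr (measure_ne_top m S))
    simpa using this
  obtain ⟨n, hn⟩ := (hlim.eventually (gt_mem_nhds hδ)).exists
  obtain ⟨D, h1, h2, h3, h4⟩ := half n
  exact ⟨D, h1, h2, h3, h4.trans hn.le⟩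

/-- **Sierpiński's theorem**: an atomless finite measure takes all intermediate values. -/
lemma AtomlessMeasure.exists_measure_eq {T : Type*} [MeasurableSpace T] {m : Measure T}
    [IsFiniteMeasure m] (hm : AtomlessMeasure m) {S : Set T} (hS : MeasurableSet S)
    {c : ℝ≥0∞} (hc : c ≤ m S) : ∃ B ⊆ S, MeasurableSet B ∧ m B = c := by
  have hctop : c ≠ ∞ := ne_top_of_le_ne_top (measure_ne_top m S) hc
  -- Greedy step: add a set whose mass is at least half of the largest mass that may be added.
  have step : ∀ B : Set T, MeasurableSet B → m B ≤ c → ∃ D ⊆ S \ B, MeasurableSet D ∧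
      m B + m D ≤ c ∧ ∀ D' ⊆ S \ B, MeasurableSet D' → m B + m D' ≤ c → m D' ≤ 2 * m D := by
    intro B hB hBc
    let V : Set ℝ≥0∞ := {r | ∃ D ⊆ S \ B, MeasurableSet D ∧ m B + m D ≤ c ∧ m D = r}
    have hVle : ∀ r ∈ V, r ≤ c := by
      rintro r ⟨D, -, -, h, rfl⟩
      exact le_add_self.trans h
    rcases eq_or_ne (sSup V) 0 with h0 | h0
    · refine ⟨∅, empty_subset _, MeasurableSet.empty, by simpa using hBc, ?_⟩
      intro D' h1 h2 h3
      have : m D' ≤ sSup V := le_sSup ⟨D', h1, h2, h3, rfl⟩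
      rw [h0] at this
      exact this.trans zero_le
    · have hfin : sSup V ≠ ∞ := ne_top_of_le_ne_top hctop (sSup_le hVle)
      obtain ⟨r, ⟨D, h1, h2, h3, rfl⟩, hr⟩ := lt_sSup_iff.1 (ENNReal.half_lt_self h0 hfin)
      refine ⟨D, h1, h2, h3, fun D' h1' h2' h3' => ?_⟩
      have : m D' ≤ sSup V := le_sSup ⟨D', h1', h2', h3', rfl⟩
      refine this.trans ?_
      rw [mul_comm]
      exact (ENNReal.div_le_iff_le_mul (by simp) (by simp)).1 hr.le
  let St := {B : Set T // B ⊆ S ∧ MeasurableSet B ∧ m B ≤ c}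
  choose! D hD1 hD2 hD3 hD4 using step
  let next : St → St := fun B => ⟨B.1 ∪ D B.1,
    union_subset B.2.1 ((hD1 _ B.2.2.1 B.2.2.2).trans sdiff_subset),
    B.2.2.1.union (hD2 _ B.2.2.1 B.2.2.2),
    (measure_union_le _ _).trans (hD3 _ B.2.2.1 B.2.2.2)⟩
  let seq : ℕ → St := fun n => next^[n] ⟨∅, empty_subset _, MeasurableSet.empty, by simp⟩
  have hsucc : ∀ n, (seq (n + 1)).1 = (seq n).1 ∪ D (seq n).1 := fun n => by
    simp only [seq, Function.iterate_succ_apply', next]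
  have hmono : Monotone fun n => (seq n).1 := monotone_nat_of_le_succ fun n => by
    rw [hsucc]; exact subset_union_left
  let B := ⋃ n, (seq n).1
  have hBmeas : MeasurableSet B := MeasurableSet.iUnion fun n => (seq n).2.2.1
  have hBS : B ⊆ S := iUnion_subset fun n => (seq n).2.1
  have hBc : m B ≤ c := by
    rw [hmono.measure_iUnion]
    exact iSup_le fun n => (seq n).2.2.2
  refine ⟨B, hBS, hBmeas, hBc.antisymm (not_lt.1 fun hlt => ?_)⟩
  have hpos : 0 < m (S \ B) := by
    rw [measure_sdiff hBS hBmeas.nullMeasurableSet (measure_ne_top _ _)]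
    exact tsub_pos_of_lt (hlt.trans_le hc)
  obtain ⟨E, hES, hE, hE0, hEle⟩ := hm.exists_small (hS.diff hBmeas) hpos (tsub_pos_of_lt hlt)
  have hEc : m B + m E ≤ c := by
    calc m B + m E ≤ m B + (c - m B) := by gcongr
      _ = c := add_tsub_cancel_of_le hBc
  -- `E` could have been added at every step, so every step adds at least `m E / 2`.
  have hEn : ∀ n, m E ≤ 2 * m (D (seq n).1) := fun n => by
    refine hD4 _ (seq n).2.2.1 (seq n).2.2.2 E ?_ hE ?_
    · exact hES.trans (sdiff_subset_sdiff_right (subset_iUnion (fun n => (seq n).1) n))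
    · exact (add_le_add_left (measure_mono (subset_iUnion (fun n => (seq n).1) n)) _).trans hEc
  have hgrow : ∀ n : ℕ, n * m E ≤ 2 * m (seq n).1 := by
    intro n
    induction n with
    | zero => simp
    | succ n ih =>
      rw [hsucc, measure_union
        (disjoint_sdiff_right.mono_right (hD1 _ (seq n).2.2.1 (seq n).2.2.2))
        (hD2 _ (seq n).2.2.1 (seq n).2.2.2), mul_add, Nat.cast_succ, add_mul, one_mul]
      exact add_le_add ih (hEn n)
  have hb : ∀ n : ℕ, n * m E ≤ 2 * c := fun n =>
    (hgrow n).trans (by gcongr; exact (seq n).2.2.2)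
  obtain ⟨n, hn⟩ := ENNReal.exists_nat_mul_gt hE0.ne' (ENNReal.mul_ne_top (by simp) hctop : 2 * c ≠ ∞)
  exact absurd (hb n) (not_le.2 hn)

/-- A finite measure with a density with respect to an atomless one is atomless: split the part of
a set on which the density is positive. -/
lemma AtomlessMeasure.withDensity {T : Type*} [MeasurableSpace T] {m : Measure T}
    [IsFiniteMeasure m] (hm : AtomlessMeasure m) {s : T → ℝ≥0∞} (hs : Measurable s)
    (hfin : ∫⁻ t, s t ∂m ≠ ∞) : AtomlessMeasure (m.withDensity s) := by
  have : IsFiniteMeasure (m.withDensity s) := isFiniteMeasure_withDensity hfin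
  have hpos : ∀ A, MeasurableSet A → (0 < m.withDensity s A ↔ 0 < m ({t | s t ≠ 0} ∩ A)) := by
    intro A hA
    rw [pos_iff_ne_zero, pos_iff_ne_zero, Ne, Ne, withDensity_apply_eq_zero hs]
  have hP : MeasurableSet {t | s t ≠ 0} := (hs (measurableSet_singleton 0)).compl
  intro A hA hA0
  obtain ⟨u, hu, hum, hu0, hult⟩ := hm _ (hP.inter hA) ((hpos A hA).1 hA0)
  have huA : u ⊆ A := hu.trans inter_subset_right
  refine ⟨u, huA, hum, (hpos u hum).2 ?_, ?_⟩
  · rwa [inter_eq_right.2 (hu.trans inter_subset_left)]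
  · have h1 : 0 < m.withDensity s (A \ u) := by
      refine (hpos _ (hA.diff hum)).2 ?_
      rw [← inter_sdiff_assoc, measure_sdiff hu hum.nullMeasurableSet (measure_ne_top _ _)]
      exact tsub_pos_of_lt hult
    rw [← union_eq_self_of_subset_left huA, ← measure_add_sdiff hum.nullMeasurableSet]
    exact ENNReal.lt_add_right (measure_ne_top _ _) h1.ne'

/-! ### Purification of fractional assignments -/

/-- Two nonnegative densities over an atomless measure can be rearranged, keeping their integrals
and their pointwise sum and without enlarging their supports, so that the supports become disjoint:
where both are positive, the whole sum is given to the first one on a set `B` and to the second one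
off `B`, with `B` provided by Sierpiński's theorem. -/
lemma AtomlessMeasure.exists_swap {T : Type*} [MeasurableSpace T] {m : Measure T}
    [IsFiniteMeasure m] (hm : AtomlessMeasure m) {p q : T → ℝ≥0∞} (hp : Measurable p)
    (hq : Measurable q) (hpi : ∫⁻ t, p t ∂m ≠ ∞) (hqi : ∫⁻ t, q t ∂m ≠ ∞) :
    ∃ p' q' : T → ℝ≥0∞, Measurable p' ∧ Measurable q' ∧ (∀ t, p' t + q' t = p t + q t) ∧
      ∫⁻ t, p' t ∂m = ∫⁻ t, p t ∂m ∧ ∫⁻ t, q' t ∂m = ∫⁻ t, q t ∂m ∧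
      (∀ t, p t = 0 → p' t = 0) ∧ (∀ t, q t = 0 → q' t = 0) ∧ ∀ t, p' t = 0 ∨ q' t = 0 := by
  let s : T → ℝ≥0∞ := fun t => p t + q t
  have hs : Measurable s := hp.add hq
  have hsi : ∫⁻ t, s t ∂m ≠ ∞ := by
    rw [lintegral_add_left hp]; exact ENNReal.add_ne_top.2 ⟨hpi, hqi⟩
  have hfin : IsFiniteMeasure (m.withDensity s) := isFiniteMeasure_withDensity hsi
  let S : Set T := {t | p t ≠ 0 ∧ q t ≠ 0}
  have hS : MeasurableSet S :=
    ((hp (measurableSet_singleton 0)).compl).inter ((hq (measurableSet_singleton 0)).compl)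
  have hc : ∫⁻ t in S, p t ∂m ≤ m.withDensity s S := by
    rw [withDensity_apply _ hS]
    exact lintegral_mono fun t => le_self_add
  obtain ⟨B, hBS, hB, hBc⟩ := (hm.withDensity hs hsi).exists_measure_eq hS hc
  rw [withDensity_apply _ hB] at hBc
  let p' : T → ℝ≥0∞ := fun t => Sᶜ.indicator p t + B.indicator s t
  let q' : T → ℝ≥0∞ := fun t => Sᶜ.indicator q t + (S \ B).indicator s t
  have hp' : Measurable p' := (hp.indicator hS.compl).add (hs.indicator hB)
  have hq' : Measurable q' := (hq.indicator hS.compl).add (hs.indicator (hS.diff hB))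
  have hsum : ∀ t, p' t + q' t = p t + q t := by
    intro t
    by_cases h : t ∈ S <;> by_cases h' : t ∈ B
    · simp [p', q', h, h', s]
    · simp [p', q', h, h', s]
    · exact absurd (hBS h') h
    · simp [p', q', h, h']
  have hpint : ∫⁻ t, p' t ∂m = ∫⁻ t, p t ∂m := by
    rw [lintegral_add_left (hp.indicator hS.compl), lintegral_indicator hS.compl,
      lintegral_indicator hB, hBc, add_comm, lintegral_add_compl _ hS]
  refine ⟨p', q', hp', hq', hsum, hpint, ?_, ?_, ?_, ?_⟩
  · have h : ∫⁻ t, p' t ∂m + ∫⁻ t, q' t ∂m = ∫⁻ t, p t ∂m + ∫⁻ t, q t ∂m := by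
      rw [← lintegral_add_left hp', ← lintegral_add_left hp]
      exact lintegral_congr hsum
    rw [hpint] at h
    exact (ENNReal.add_right_inj hpi).1 h
  · intro t ht
    have h : t ∉ S := fun h => h.1 ht
    have h' : t ∉ B := fun h' => h (hBS h')
    simp [p', h, h', ht]
  · intro t ht
    have h : t ∉ S := fun h => h.2 ht
    simp [q', h, ht]
  · intro t
    by_cases h : t ∈ S
    · by_cases h' : t ∈ B
      · right; simp [q', h, h']
      · left; simp [p', h, h']
    · have h' : t ∉ B := fun h' => h (hBS h')
      rcases not_and_or.1 h with h0 | h0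
      · left; simp [p', h, h', not_not.1 h0]
      · right; simp [q', h, not_not.1 h0]

/-- A fractional assignment with marginal `ν`: the fraction `g y t` of the point `t` is sent to `y`,
at most all of `t` is used, and the total mass sent to `y` is `ν {y}`. -/
structure FractionalAssignment {T Y : Type*} [MeasurableSpace T] [MeasurableSpace Y]
    (lam : Measure T) (ν : Measure Y) (g : Y → T → ℝ≥0∞) : Prop where
  meas : ∀ y, Measurable (g y)
  sum_le : ∀ t, ∑' y, g y t ≤ 1
  lintegral_eq : ∀ y, ∫⁻ t, g y t ∂lam = ν {y}

/-- One step of the purification: the supports of the fractions sent to `y` and to `z` are made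
disjoint without enlarging any support. -/
lemma FractionalAssignment.exists_step {T Y : Type*} [MeasurableSpace T] [MeasurableSpace Y]
    {lam : Measure T} [IsFiniteMeasure lam] (hlam : AtomlessMeasure lam) {ν : Measure Y}
    [IsFiniteMeasure ν] {g : Y → T → ℝ≥0∞} (hg : FractionalAssignment lam ν g) (y z : Y) :
    ∃ g', FractionalAssignment lam ν g' ∧ (∀ w t, g w t = 0 → g' w t = 0) ∧
      (y ≠ z → ∀ t, g' y t = 0 ∨ g' z t = 0) := by
  classical
  rcases eq_or_ne y z with rfl | hyz
  · exact ⟨g, hg, fun _ _ h => h, fun h => absurd rfl h⟩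
  obtain ⟨p, q, hp, hq, hpq, hpi, hqi, hp0, hq0, hdisj⟩ := hlam.exists_swap (hg.meas y) (hg.meas z)
    (by rw [hg.lintegral_eq]; exact measure_ne_top _ _)
    (by rw [hg.lintegral_eq]; exact measure_ne_top _ _)
  let g' : Y → T → ℝ≥0∞ := fun w => if w = y then p else if w = z then q else g w
  have hy : g' y = p := by simp [g']
  have hz : g' z = q := by simp [g', hyz.symm]
  have ho : ∀ w, w ≠ y → w ≠ z → g' w = g w := fun w h h' => by simp [g', h, h']
  refine ⟨g', ⟨fun w => ?_, fun t => ?_, fun w => ?_⟩, fun w t h => ?_, fun _ t => ?_⟩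
  · by_cases h : w = y
    · subst h; rwa [hy]
    by_cases h' : w = z
    · subst h'; rwa [hz]
    rw [ho w h h']; exact hg.meas w
  · refine le_trans (le_of_eq ?_) (hg.sum_le t)
    have split : ∀ f : Y → ℝ≥0∞, ∑' w, f w
        = (f y + f z) + ∑' w, if w = z then 0 else if w = y then 0 else f w := fun f => by
      have h1 := ENNReal.tsum_eq_add_tsum_ite (f := f) y
      have h2 := ENNReal.tsum_eq_add_tsum_ite
        (f := fun w => if w = y then 0 else f w) z
      rw [h1, h2, if_neg hyz.symm, add_assoc]
    rw [split (fun w => g' w t), split (fun w => g w t), hy, hz, hpq]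
    congr 1
    refine tsum_congr fun w => ?_
    by_cases h : w = z
    · simp [h]
    by_cases h' : w = y
    · simp [h']
    rw [ho w h' h]
  · by_cases h : w = y
    · subst h; rw [hy, hpi, hg.lintegral_eq]
    by_cases h' : w = z
    · subst h'; rw [hz, hqi, hg.lintegral_eq]
    rw [ho w h h', hg.lintegral_eq]
  · by_cases hw : w = y
    · subst hw; rw [hy]; exact hp0 t h
    by_cases hw' : w = z
    · subst hw'; rw [hz]; exact hq0 t h
    rwa [ho w hw hw']
  · rw [hy, hz]; exact hdisj t

/-- **Purification**: over an atomless probability space, a fractional assignment to a countable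
set is replaced by a function that has the same distribution and takes almost surely a value
allowed by the fractional assignment. Run through all pairs `(y, z)`, making the supports disjoint
at each step, and let `A y` be the intersection of the decreasing supports of the fractions sent to
`y`. The sets `A y` are disjoint, and `lam (A y) ≥ ν {y}` because each support has mass at least
`ν {y}`. -/
lemma FractionalAssignment.exists_pure {T Y : Type*} [MeasurableSpace T] [MeasurableSpace Y]
    [Countable Y] [MeasurableSingletonClass Y]
    {lam : Measure T} [IsProbabilityMeasure lam] (hlam : AtomlessMeasure lam) {ν : Measure Y}
    [IsProbabilityMeasure ν] {g : Y → T → ℝ≥0∞} (hg : FractionalAssignment lam ν g) :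
    ∃ f : T → Y, Measurable f ∧ (∀ᵐ t ∂lam, g (f t) t ≠ 0) ∧ lam.map f = ν := by
  classical
  have hY : Nonempty Y := ν.nonempty_of_neZero
  obtain ⟨e, he⟩ := exists_surjective_nat (Y × Y)
  let St := {h : Y → T → ℝ≥0∞ // FractionalAssignment lam ν h}
  have step : ∀ (n : ℕ) (h : St), ∃ h' : St, (∀ w t, h.1 w t = 0 → h'.1 w t = 0) ∧
      ((e n).1 ≠ (e n).2 → ∀ t, h'.1 (e n).1 t = 0 ∨ h'.1 (e n).2 t = 0) := fun n h =>
    let ⟨h', h1, h2, h3⟩ := h.2.exists_step hlam (e n).1 (e n).2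
    ⟨⟨h', h1⟩, h2, h3⟩
  choose next hnext1 hnext2 using step
  let G : ℕ → St := fun n => Nat.rec ⟨g, hg⟩ next n
  have hG : ∀ n, G (n + 1) = next n (G n) := fun n => rfl
  let P : Y → ℕ → Set T := fun y n => {t | (G n).1 y t ≠ 0}
  have hPm : ∀ y n, MeasurableSet (P y n) := fun y n =>
    ((G n).2.meas y (measurableSet_singleton 0)).compl
  have hPanti : ∀ y, Antitone (P y) := fun y => antitone_nat_of_succ_le fun n t ht h =>
    ht (by rw [hG]; exact hnext1 n _ y t h)
  let A : Y → Set T := fun y => ⋂ n, P y n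
  have hAm : ∀ y, MeasurableSet (A y) := fun y => MeasurableSet.iInter (hPm y)
  have hAdisj : Pairwise (Function.onFun Disjoint A) := by
    intro y z hyz
    rw [Function.onFun, Set.disjoint_left]
    intro t hty htz
    obtain ⟨n, hn⟩ := he (y, z)
    have h := hnext2 n (G n) (by rw [hn]; exact hyz) t
    rw [hn, ← hG] at h
    rcases h with h | h
    · exact mem_iInter.1 hty (n + 1) h
    · exact mem_iInter.1 htz (n + 1) h
  have hAν : ∀ y, ν {y} ≤ lam (A y) := by
    intro y
    rw [(hPanti y).measure_iInter (fun n => (hPm y n).nullMeasurableSet) ⟨0, measure_ne_top _ _⟩]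
    refine le_iInf fun n => ?_
    rw [← (G n).2.lintegral_eq y, ← lintegral_indicator_one (hPm y n)]
    refine lintegral_mono fun t => ?_
    by_cases h : (G n).1 y t = 0
    · simp [h]
    · rw [indicator_of_mem (show t ∈ P y n from h)]
      exact (ENNReal.le_tsum y).trans ((G n).2.sum_le t)
  have hcover : ∀ᵐ t ∂lam, t ∈ ⋃ y, A y := by
    refine (prob_compl_eq_zero_iff (MeasurableSet.iUnion hAm)).2 (prob_le_one.antisymm ?_)
    rw [measure_iUnion hAdisj hAm]
    calc (1 : ℝ≥0∞) = ν univ := measure_univ.symm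
      _ = ∑' y, ν {y} := by
        rw [← Measure.tsum_indicator_apply_singleton ν univ MeasurableSet.univ]
        simp only [indicator_univ]
      _ ≤ _ := ENNReal.tsum_le_tsum hAν
  obtain ⟨y₀⟩ := hY
  let f : T → Y := fun t => if h : ∃ y, t ∈ A y then h.choose else y₀
  have hf : ∀ y, ∀ t ∈ A y, f t = y := by
    intro y t ht
    have hex : ∃ y, t ∈ A y := ⟨y, ht⟩
    simp only [f, dif_pos hex]
    by_contra hne
    exact Set.disjoint_left.1 (hAdisj hne) hex.choose_spec ht
  have hf₀ : ∀ t, t ∉ ⋃ y, A y → f t = y₀ := by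
    intro t ht
    simp only [f]
    rw [dif_neg (by simpa using ht)]
  have hfm : Measurable f := by
    refine measurable_to_countable' fun y => ?_
    have : f ⁻¹' {y} = A y ∪ ((⋃ y, A y)ᶜ ∩ {_t | y₀ = y}) := by
      ext t
      by_cases ht : t ∈ ⋃ y, A y
      · obtain ⟨z, hz⟩ := mem_iUnion.1 ht
        simp only [mem_preimage, mem_singleton_iff, hf z t hz, mem_union, mem_inter_iff,
          mem_compl_iff, ht, not_true_eq_false, false_and, or_false]
        exact ⟨fun h => h ▸ hz, fun h => (hf z t hz).symm.trans (hf y t h)⟩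
      · have : t ∉ A y := fun h => ht (mem_iUnion.2 ⟨y, h⟩)
        simp only [mem_preimage, hf₀ t ht, mem_singleton_iff, mem_union, this, false_or,
          mem_inter_iff, mem_compl_iff, ht, not_false_eq_true, true_and, mem_ofPred_eq]
    rw [this]
    exact (hAm y).union ((MeasurableSet.iUnion hAm).compl.inter (MeasurableSet.const _))
  refine ⟨f, hfm, ?_, ?_⟩
  · filter_upwards [hcover] with t ht
    obtain ⟨y, hy⟩ := mem_iUnion.1 ht
    rw [hf y t hy]
    exact mem_iInter.1 hy 0
  · have : IsProbabilityMeasure (lam.map f) := Measure.isProbabilityMeasure_map hfm.aemeasurable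
    symm
    refine Measure.eq_of_le_of_isProbabilityMeasure ?_
    refine Measure.le_iff.2 fun s hs => ?_
    rw [← Measure.tsum_indicator_apply_singleton ν s hs,
      ← Measure.tsum_indicator_apply_singleton (lam.map f) s hs]
    refine ENNReal.tsum_le_tsum fun y => indicator_le_indicator ?_
    rw [Measure.map_apply hfm (measurableSet_singleton y)]
    exact (hAν y).trans (measure_mono fun t ht => hf y t ht)

/-! ### Tightness and closedness -/

/-- The distributions of the selections of a measurable correspondence with compact values in a
countable complete metric space are uniformly tight: for each scale `1 / (n + 1)`, outside a set of
`t` of small mass, the compact set `F t` is covered by the first `M n` balls of that radius. -/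
lemma exists_isCompact_forall_selection {T Y : Type*} [MeasurableSpace T]
    [MetricSpace Y] [Countable Y] [CompleteSpace Y]
    (lam : Measure T) [IsFiniteMeasure lam]
    {F : T → Set Y} (hcomp : ∀ t, IsCompact (F t))
    (hmeas : ∀ C : Set Y, IsClosed C → MeasurableSet {t : T | (F t ∩ C).Nonempty})
    {ε : ℝ≥0∞} (hε : 0 < ε) :
    ∃ K : Set Y, IsCompact K ∧
      ∀ f : T → Y, (∀ᵐ t ∂lam, f t ∈ F t) → lam (f ⁻¹' Kᶜ) ≤ ε := by
  rcases isEmpty_or_nonempty Y with hY | hY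
  · refine ⟨∅, isCompact_empty, fun f _ => ?_⟩
    have : IsEmpty T := f.isEmpty
    rw [Set.eq_empty_of_isEmpty (f ⁻¹' ∅ᶜ)]; simp
  obtain ⟨y, hy⟩ := exists_surjective_nat Y
  let U : ℕ → ℕ → Set Y := fun n m => ⋃ i ≤ m, Metric.ball (y i) (1 / (n + 1 : ℝ))
  have hU : ∀ n m, IsOpen (U n m) := fun n m =>
    isOpen_biUnion fun i _ => Metric.isOpen_ball
  have hUmono : ∀ n, Monotone (U n) := fun n a b hab =>
    biUnion_subset_biUnion_left fun i (hi : i ≤ a) => hi.trans hab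
  let N : ℕ → ℕ → Set T := fun n m => {t | (F t ∩ (U n m)ᶜ).Nonempty}
  have hN : ∀ n m, MeasurableSet (N n m) := fun n m => hmeas _ (hU n m).isClosed_compl
  have hNanti : ∀ n, Antitone (N n) := fun n a b hab t ht =>
    ht.mono (inter_subset_inter_right _ (compl_subset_compl.2 (hUmono n hab)))
  have hNempty : ∀ n, ⋂ m, N n m = ∅ := by
    intro n
    rw [Set.eq_empty_iff_forall_notMem]
    intro t ht
    obtain ⟨m, hm⟩ := (hcomp t).elim_directed_cover (U n) (hU n) (fun x _ => by
      obtain ⟨i, rfl⟩ := hy x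
      exact mem_iUnion.2 ⟨i, mem_biUnion (le_refl i) (Metric.mem_ball_self (by positivity))⟩)
      (hUmono n).directed_le
    obtain ⟨x, hx, hx'⟩ := mem_iInter.1 ht m
    exact hx' (hm hx)
  obtain ⟨δ, hδ, hδsum⟩ := ENNReal.exists_pos_sum_of_countable' hε.ne' ℕ
  have hM : ∀ n, ∃ m, lam (N n m) ≤ δ n := by
    intro n
    have h := tendsto_measure_iInter_atTop (μ := lam) (fun m => (hN n m).nullMeasurableSet)
      (hNanti n) ⟨0, measure_ne_top _ _⟩
    rw [hNempty, measure_empty] at h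
    exact ((h.eventually (gt_mem_nhds (hδ n))).exists).imp fun m hm => hm.le
  choose M hM using hM
  refine ⟨⋂ n, ⋃ i ≤ M n, Metric.closedBall (y i) (1 / (n + 1 : ℝ)), ?_, fun f hf => ?_⟩
  · refine TotallyBounded.isCompact_of_isClosed ?_ ?_
    · rw [Metric.totallyBounded_iff]
      intro r hr
      obtain ⟨n, hn⟩ := exists_nat_one_div_lt hr
      refine ⟨y '' Iic (M n), (finite_Iic _).image y, ?_⟩
      rw [biUnion_image]
      refine (iInter_subset _ n).trans (iUnion₂_mono fun i _ => ?_)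
      exact Metric.closedBall_subset_ball hn
    · exact isClosed_iInter fun n =>
        (finite_Iic (M n)).isClosed_biUnion fun i _ => Metric.isClosed_closedBall
  · calc lam (f ⁻¹' _) ≤ lam (⋃ n, N n (M n)) := by
          refine measure_mono_ae ?_
          filter_upwards [hf] with t ht hfK
          by_contra hcon
          refine hfK (mem_iInter.2 fun n => ?_)
          have hFU : f t ∈ U n (M n) := by
            by_contra hout
            exact hcon (mem_iUnion.2 ⟨n, f t, ht, hout⟩)
          exact iUnion₂_mono (fun i _ => Metric.ball_subset_closedBall) hFU
      _ ≤ ∑' n, lam (N n (M n)) := measure_iUnion_le _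
      _ ≤ ∑' n, δ n := ENNReal.tsum_le_tsum hM
      _ ≤ ε := hδsum.le

/-- By the portmanteau theorem, the probability measures supported on a closed set form a closed
set. -/
lemma isClosed_setOf_measure_compl_eq_zero {Z : Type*} [TopologicalSpace Z] [MeasurableSpace Z]
    [OpensMeasurableSpace Z] [HasOuterApproxClosed Z] {G : Set Z} (hG : IsClosed G) :
    IsClosed {τ : ProbabilityMeasure Z | (τ : Measure Z) Gᶜ = 0} := by
  refine isClosed_of_closure_subset fun τ hτ => ?_
  have hne : (𝓝 τ ⊓ 𝓟 {τ : ProbabilityMeasure Z | (τ : Measure Z) Gᶜ = 0}).NeBot :=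
    mem_closure_iff_clusterPt.1 hτ
  have h := ProbabilityMeasure.le_liminf_measure_open_of_tendsto
    (μs := id) (tendsto_id'.2 (inf_le_left (b := 𝓟 {τ : ProbabilityMeasure Z |
      (τ : Measure Z) Gᶜ = 0}) (a := 𝓝 τ))) hG.isOpen_compl
  have h0 : ∀ᶠ σ : ProbabilityMeasure Z in
      𝓝 τ ⊓ 𝓟 {τ : ProbabilityMeasure Z | (τ : Measure Z) Gᶜ = 0},
      ((id σ : ProbabilityMeasure Z) : Measure Z) Gᶜ = 0 :=
    mem_inf_of_right (mem_principal_self _)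
  rw [liminf_congr h0, liminf_const] at h
  exact le_antisymm h zero_le

/-! ### Compactness of the set of distributions -/

theorem stmt_6 {T Y : Type*} [MeasurableSpace T]
    [MetricSpace Y] [Countable Y] [CompleteSpace Y] [MeasurableSpace Y] [BorelSpace Y]
    (lam : Measure T) [IsProbabilityMeasure lam] (hatomless : AtomlessMeasure lam)
    (F : T → Set Y) (hne : ∀ t, (F t).Nonempty) (hcomp : ∀ t, IsCompact (F t))
    (hmeas : ∀ C : Set Y, IsClosed C → MeasurableSet {t : T | (F t ∩ C).Nonempty}) :
    IsCompact (distrOfSelections lam F) := by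
  classical
  have hYne : Nonempty Y := by
    obtain ⟨t⟩ := lam.nonempty_of_neZero
    exact ⟨(hne t).some⟩
  have hsc : SecondCountableTopology Y := UniformSpace.secondCountable_of_separable Y
  -- `φ t` records which closed balls with centre in `Y` and radius `1 / (k + 1)` meet `F t`.
  let φ : T → (Y × ℕ → Bool) := fun t i =>
    decide ((F t ∩ Metric.closedBall i.1 (1 / (i.2 + 1 : ℝ))).Nonempty)
  have hφ : Measurable φ := by
    refine measurable_pi_iff.2 fun i => measurable_to_bool ?_
    have := hmeas (Metric.closedBall i.1 (1 / (i.2 + 1 : ℝ))) Metric.isClosed_closedBall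
    convert this using 1
    ext t
    simp [φ]
  -- Membership `y ∈ F t` is the condition `(φ t, y) ∈ G`. Taking open balls in the premise while
  -- `φ` refers to closed ones is what makes `G` closed.
  let G : Set ((Y × ℕ → Bool) × Y) :=
    {p | ∀ i : Y × ℕ, p.2 ∈ Metric.ball i.1 (1 / (i.2 + 1 : ℝ)) → p.1 i = true}
  have hG : IsClosed G := by
    have : G = ⋂ i : Y × ℕ, ({p | p.2 ∈ Metric.ball i.1 (1 / (i.2 + 1 : ℝ))}ᶜ ∪
        {p | p.1 i = true}) := by
      ext p
      simp only [G, mem_ofPred_eq, mem_iInter, mem_union, mem_compl_iff, imp_iff_not_or]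
    rw [this]
    refine isClosed_iInter fun i => IsClosed.union ?_ ?_
    · exact (Metric.isOpen_ball.preimage continuous_snd).isClosed_compl
    · exact isClosed_eq ((continuous_apply i).comp continuous_fst) continuous_const
  have hGF : ∀ t y, (φ t, y) ∈ G ↔ y ∈ F t := by
    intro t y
    constructor
    · intro h
      rw [← (hcomp t).isClosed.closure_eq, Metric.mem_closure_iff]
      intro r hr
      obtain ⟨k, hk⟩ := exists_nat_one_div_lt hr
      have h1 := h (y, k) (Metric.mem_ball_self (by positivity))
      obtain ⟨x, hx, hxy⟩ := of_decide_eq_true h1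
      exact ⟨x, hx, (Metric.mem_closedBall'.1 hxy).trans_lt hk⟩
    · intro h i hi
      exact decide_eq_true ⟨y, h, Metric.ball_subset_closedBall hi⟩
  obtain ⟨u, -, hupos, hulim⟩ :
      ∃ u : ℕ → ℝ≥0, StrictAnti u ∧ (∀ n, 0 < u n) ∧ Tendsto u atTop (𝓝 0) :=
    exists_seq_strictAnti_tendsto 0
  have hK := fun n => exists_isCompact_forall_selection lam hcomp hmeas
    (ENNReal.coe_pos.2 (hupos n))
  choose K hKc hK using hK
  let μ : ProbabilityMeasure (Y × ℕ → Bool) :=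
    ⟨lam.map φ, Measure.isProbabilityMeasure_map hφ.aemeasurable⟩
  -- The couplings of the law of `φ` with a law on `Y` that are supported on `G`; the first
  -- condition is a quantitative tightness that the couplings coming from selections satisfy.
  let W : Set (ProbabilityMeasure ((Y × ℕ → Bool) × Y)) :=
    {τ | ∀ n, τ (univ ×ˢ K n)ᶜ ≤ u n} ∩
      ({τ | τ.map measurable_fst.aemeasurable = μ} ∩
        {τ | (τ : Measure ((Y × ℕ → Bool) × Y)) Gᶜ = 0})
  have hW : IsCompact W := by
    refine IsCompact.inter_right
      (isCompact_setOfPred_probabilityMeasure_mass_eq_compl_isCompact_le hulim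
        (fun n => isCompact_univ.prod (hKc n)) (Or.inl inferInstance)) (IsClosed.inter ?_ ?_)
    · exact isClosed_eq (ProbabilityMeasure.continuous_map continuous_fst) continuous_const
    · exact isClosed_setOf_measure_compl_eq_zero hG
  suffices h : distrOfSelections lam F =
      (fun τ : ProbabilityMeasure ((Y × ℕ → Bool) × Y) =>
        τ.map measurable_snd.aemeasurable) '' W by
    rw [h]
    exact hW.image (ProbabilityMeasure.continuous_map continuous_snd)
  ext ν
  constructor
  · rintro ⟨f, hf, hfF, hν⟩
    have hφf : Measurable fun t => (φ t, f t) := hφ.prodMk hf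
    let τ : ProbabilityMeasure ((Y × ℕ → Bool) × Y) :=
      ⟨lam.map fun t => (φ t, f t), Measure.isProbabilityMeasure_map hφf.aemeasurable⟩
    refine ⟨τ, ⟨fun n => ?_, ?_, ?_⟩, ?_⟩
    · rw [← ENNReal.coe_le_coe, ProbabilityMeasure.ennreal_coeFn_eq_coeFn_toMeasure]
      change (lam.map fun t => (φ t, f t)) (univ ×ˢ K n)ᶜ ≤ u n
      rw [Measure.map_apply hφf (MeasurableSet.univ.prod (hKc n).measurableSet).compl]
      refine le_trans (measure_mono fun t ht => ?_) (hK n f hfF)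
      simpa using ht
    · refine Subtype.ext ?_
      change (lam.map fun t => (φ t, f t)).map Prod.fst = lam.map φ
      rw [Measure.map_map measurable_fst hφf]
      rfl
    · change (lam.map fun t => (φ t, f t)) Gᶜ = 0
      rw [Measure.map_apply hφf hG.measurableSet.compl]
      refine measure_mono_null (fun t ht => ?_) hfF
      exact fun h => ht ((hGF t (f t)).2 h)
    · refine Subtype.ext ?_
      change (lam.map fun t => (φ t, f t)).map Prod.snd = (ν : Measure Y)
      rw [Measure.map_map measurable_snd hφf, hν]
      rfl
  · rintro ⟨τ, ⟨-, hτμ, hτG⟩, rfl⟩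
    let σ : Measure ((Y × ℕ → Bool) × Y) := τ
    have hfst : σ.fst = lam.map φ := congrArg Subtype.val hτμ
    have hdis : σ.fst ⊗ₘ σ.condKernel = σ := σ.disintegrate σ.condKernel
    -- The conditional law of the second coordinate given `φ t`, as a fractional assignment.
    let g : Y → T → ℝ≥0∞ := fun y t => σ.condKernel (φ t) {y}
    have hκ : ∀ y : Y, Measurable fun x => σ.condKernel x {y} := fun y =>
      ProbabilityTheory.Kernel.measurable_coe _ (measurableSet_singleton y)
    have hsnd : IsProbabilityMeasure σ.snd := inferInstance
    have hg : FractionalAssignment lam σ.snd g := by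
      refine ⟨fun y => (hκ y).comp hφ, fun t => ?_, fun y => ?_⟩
      · have h := Measure.tsum_indicator_apply_singleton (σ.condKernel (φ t)) univ MeasurableSet.univ
        simp only [indicator_univ, measure_univ] at h
        exact h.le
      · rw [← lintegral_map (hκ y) hφ, ← hfst, Measure.snd_apply (measurableSet_singleton y)]
        conv_rhs => rw [← hdis]
        rw [Measure.compProd_apply (measurable_snd (measurableSet_singleton y))]
        rfl
    obtain ⟨f, hf, hfg, hfν⟩ := hg.exists_pure hatomless
    refine ⟨f, hf, ?_, hfν.symm⟩
    have hnull : ∀ᵐ t ∂lam, σ.condKernel (φ t) (Prod.mk (φ t) ⁻¹' Gᶜ) = 0 := by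
      have h : (σ.fst ⊗ₘ σ.condKernel) Gᶜ = 0 := by rw [hdis]; exact hτG
      rw [Measure.compProd_apply hG.measurableSet.compl, hfst, lintegral_eq_zero_iff
        (ProbabilityTheory.Kernel.measurable_kernel_prodMk_left hG.measurableSet.compl)] at h
      exact ae_of_ae_map hφ.aemeasurable h
    filter_upwards [hfg, hnull] with t h1 h2
    by_contra hcon
    refine h1 (measure_mono_null (singleton_subset_iff.2 ?_) h2)
    exact fun h => hcon ((hGF t (f t)).1 h)
end

section
/- Let X be a metric space, (T, 𝒯, λ) an atomless probability space, Y a countable complete metric space, and F : T × X → 2^Y a correspondence such that for each fixed x ∈ X the map F(·, x) is a compact-valued measurable correspondence, for each fixed t ∈ T the map F(t, ·) is upper semicontinuous on X, and there exists a compact-valued correspondence H : T → 2^Y with F(t,x) ⊆ H(t) for all t, x. Then the map x ↦ D_{F_x} = { λ ∘ f⁻¹ : f a measurable selection of F(·, x) } is upper semicontinuous from X into 2^{M(Y)}. -/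
/-!
Since `X` is metric, a failure of upper semicontinuity at `x` yields points `x_n → x` and selections
`f_n` of `F(·, x_n)` whose laws all avoid an open set `V` containing the laws of the selections of
`F(·, x)`. The laws of the `f_n` are tight, because `f_n(t)` lies in the compact set `H(t)`
(`isTightMeasureSet_map`); by Prokhorov's theorem they converge to some `ν` along an ultrafilter.
It suffices to show that `ν` is the law of a selection of `F(·, x)`.

The `f_n` also have a limit in the sense of Young measures: a relaxed selection of `F(·, x)` with
marginal `ν` (`exists_isRelaxedSelection_of_tendsto`). It is supported in `F(·, x)` because
`F(t, ·)` is upper semicontinuous. The relaxed selections with marginal `ν` form a nonempty compact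
convex set, which has an extreme point by the Krein-Milman theorem. As `lam` is atomless, an extreme
relaxed selection is deterministic (`IsRelaxedSelection.density_disjoint`): mass that is shared
between two values on a set of positive measure could be redistributed between them in two opposite
ways. This deterministic selection has law `ν` (`IsRelaxedSelection.exists_selection`).
-/

open MeasureTheory

/-- Upper semicontinuity of a correspondence. -/
def UpperSemicontinuousCorr {X Z : Type*} [TopologicalSpace X] [TopologicalSpace Z]
    (G : X → Set Z) : Prop :=
  ∀ x : X, ∀ V : Set Z, IsOpen V → G x ⊆ V →
    ∃ U : Set X, IsOpen U ∧ x ∈ U ∧ ∀ y ∈ U, G y ⊆ V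

open Filter Topology Set
open scoped ENNReal

/-! ### Relaxed selections -/

/-- A relaxed (randomised) selection with `Y`-marginal `p` of the correspondence `t ↦ {y | t ∈ A y}`.
The number `m E y` is the mass of `E × {y}` under a measure on `T × Y` with `T`-marginal `lam`.
Such a measure is encoded as a plain function `Set T → Y → ℝ` so that the relaxed selections form a
subset of a product of real lines; the value on nonmeasurable sets is fixed to be `0`.
Only finite additivity in `E` is required, countable additivity being a consequence of
`m E y ≤ lam E`; `sum_le` becomes the marginal condition `∑' y, m E y = lam E` once `∑' y, p y = 1`. -/
structure IsRelaxedSelection {T Y : Type*} [MeasurableSpace T] (lam : Measure T)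
    (A : Y → Set T) (p : Y → ℝ) (m : Set T → Y → ℝ) : Prop where
  nonmeas : ∀ E y, ¬ MeasurableSet E → m E y = 0
  nonneg : ∀ E y, 0 ≤ m E y
  add : ∀ E E' y, MeasurableSet E → MeasurableSet E' → Disjoint E E' →
    m (E ∪ E') y = m E y + m E' y
  sum_le : ∀ E (S : Finset Y), MeasurableSet E → ∑ y ∈ S, m E y ≤ lam.real E
  supp : ∀ y, m (A y)ᶜ y = 0
  total : ∀ y, m univ y = p y

section relaxed

variable {T Y : Type*} [MeasurableSpace T] {lam : Measure T} {A : Y → Set T} {p : Y → ℝ}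
  {m : Set T → Y → ℝ}

lemma IsRelaxedSelection.le (hm : IsRelaxedSelection lam A p m) {E : Set T}
    (hE : MeasurableSet E) (y : Y) : m E y ≤ lam.real E := by
  simpa using hm.sum_le E {y} hE

lemma IsRelaxedSelection.empty (hm : IsRelaxedSelection lam A p m) (y : Y) : m ∅ y = 0 := by
  have h := hm.add ∅ ∅ y .empty .empty (by simp)
  simp only [union_self] at h
  linarith

/-- All the defining conditions are closed in the product topology, so Tychonoff's theorem gives
compactness. -/
lemma isCompact_setOf_isRelaxedSelection [IsProbabilityMeasure lam] :
    IsCompact {m : Set T → Y → ℝ | IsRelaxedSelection lam A p m} := by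
  have hK : IsCompact (Set.pi univ fun _ : Set T => Set.pi univ fun _ : Y => Icc (0 : ℝ) 1) :=
    isCompact_univ_pi fun _ => isCompact_univ_pi fun _ => isCompact_Icc
  refine hK.of_isClosed_subset ?_ ?_
  · have hc : ∀ (E : Set T) (y : Y), Continuous fun m : Set T → Y → ℝ => m E y := by
      intro E y; fun_prop
    have : {m : Set T → Y → ℝ | IsRelaxedSelection lam A p m} =
        {m | ∀ E y, ¬ MeasurableSet E → m E y = 0} ∩ {m | ∀ E y, 0 ≤ m E y} ∩
        {m | ∀ E E' y, MeasurableSet E → MeasurableSet E' → Disjoint E E' →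
          m (E ∪ E') y = m E y + m E' y} ∩
        {m | ∀ E (S : Finset Y), MeasurableSet E → ∑ y ∈ S, m E y ≤ lam.real E} ∩
        {m | ∀ y, m (A y)ᶜ y = 0} ∩ {m | ∀ y, m univ y = p y} := by
      ext m
      constructor
      · rintro ⟨h1, h2, h3, h4, h5, h6⟩
        exact ⟨⟨⟨⟨⟨h1, h2⟩, h3⟩, h4⟩, h5⟩, h6⟩
      · rintro ⟨⟨⟨⟨⟨h1, h2⟩, h3⟩, h4⟩, h5⟩, h6⟩
        exact ⟨h1, h2, h3, h4, h5, h6⟩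
    rw [this]
    refine ((((IsClosed.inter ?_ ?_).inter ?_).inter ?_).inter ?_).inter ?_
    all_goals simp only [ofPred_forall]
    · exact isClosed_iInter fun E => isClosed_iInter fun y => isClosed_iInter fun _ =>
        isClosed_eq (hc _ _) continuous_const
    · exact isClosed_iInter fun E => isClosed_iInter fun y => isClosed_le continuous_const (hc _ _)
    · exact isClosed_iInter fun E => isClosed_iInter fun E' => isClosed_iInter fun y =>
        isClosed_iInter fun _ => isClosed_iInter fun _ => isClosed_iInter fun _ =>
        isClosed_eq (hc _ _) ((hc _ _).add (hc _ _))
    · exact isClosed_iInter fun E => isClosed_iInter fun S => isClosed_iInter fun _ =>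
        isClosed_le (continuous_finsetSum _ fun y _ => hc _ _) continuous_const
    · exact isClosed_iInter fun y => isClosed_eq (hc _ _) continuous_const
    · exact isClosed_iInter fun y => isClosed_eq (hc _ _) continuous_const
  · intro m hm E _ y _
    refine ⟨hm.nonneg E y, ?_⟩
    by_cases hE : MeasurableSet E
    · exact (hm.le hE y).trans measureReal_le_one
    · rw [hm.nonmeas E y hE]; exact zero_le_one

/-- Countable additivity: the tails of the series are dominated by `lam` of sets decreasing to `∅`. -/
lemma IsRelaxedSelection.hasSum_iUnion [IsProbabilityMeasure lam]
    (hm : IsRelaxedSelection lam A p m) (y : Y) {g : ℕ → Set T}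
    (hg : ∀ i, MeasurableSet (g i)) (hd : Pairwise (Function.onFun Disjoint g)) :
    HasSum (fun i => m (g i) y) (m (⋃ i, g i) y) := by
  rw [hasSum_iff_tendsto_nat_of_nonneg (fun i => hm.nonneg _ _)]
  -- The tail unions.
  let R : ℕ → Set T := fun n => ⋃ i ∈ Ici n, g i
  have hR : ∀ n, MeasurableSet (R n) := fun n =>
    MeasurableSet.biUnion (to_countable _) fun i _ => hg i
  have hstep : ∀ n, R n = g n ∪ R (n + 1) := by
    intro n
    ext t
    simp only [R, mem_iUnion, mem_Ici, mem_union, exists_prop]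
    constructor
    · rintro ⟨i, hi, ht⟩
      rcases hi.eq_or_lt with rfl | h
      · exact .inl ht
      · exact .inr ⟨i, h, ht⟩
    · rintro (h | ⟨i, hi, ht⟩)
      · exact ⟨n, le_rfl, h⟩
      · exact ⟨i, by omega, ht⟩
  have hdisj : ∀ n, Disjoint (g n) (R (n + 1)) := by
    intro n
    simp only [R, disjoint_iUnion_right, mem_Ici]
    intro i hi
    exact hd (by omega)
  have hsum : ∀ n, ∑ i ∈ Finset.range n, m (g i) y = m (⋃ i, g i) y - m (R n) y := by
    intro n
    induction n with
    | zero =>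
      have : R 0 = ⋃ i, g i := by simp [R]
      simp [this]
    | succ n ih =>
      rw [Finset.sum_range_succ, ih, hstep n, hm.add _ _ y (hg n) (hR _) (hdisj n)]
      ring
  simp only [hsum]
  have hempty : ⋂ n, R n = ∅ := by
    ext t
    simp only [R, mem_iInter, mem_iUnion, mem_Ici, exists_prop, mem_empty_iff_false, iff_false,
      not_forall]
    by_contra! hcon
    obtain ⟨i, -, hi⟩ := hcon 0
    obtain ⟨j, hj, hj'⟩ := hcon (i + 1)
    exact Set.disjoint_left.1 (hd (show i ≠ j by omega)) hi hj'
  have hanti : Antitone R := by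
    intro a b hab
    exact biUnion_subset_biUnion_left (Ici_subset_Ici.2 hab)
  have h0 : Tendsto (fun n => lam.real (R n)) atTop (𝓝 0) := by
    have := tendsto_measure_iInter_atTop (μ := lam) (fun n => (hR n).nullMeasurableSet) hanti
      ⟨0, measure_ne_top _ _⟩
    rw [hempty, measure_empty] at this
    have h := (ENNReal.tendsto_toReal ENNReal.zero_ne_top).comp this
    rw [ENNReal.toReal_zero] at h
    exact h
  have h1 : Tendsto (fun n => m (R n) y) atTop (𝓝 0) :=
    squeeze_zero (fun n => hm.nonneg _ _) (fun n => hm.le (hR n) y) h0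
  simpa using tendsto_const_nhds.sub h1

/-- Each `m · y` is a measure dominated by `lam`, so it has a Radon-Nikodym density `ψ y`. -/
lemma IsRelaxedSelection.exists_density [IsProbabilityMeasure lam]
    (hm : IsRelaxedSelection lam A p m) :
    ∃ ψ : Y → T → ℝ≥0∞, (∀ y, Measurable (ψ y)) ∧
      ∀ y E, MeasurableSet E → ∫⁻ t in E, ψ y t ∂lam = ENNReal.ofReal (m E y) := by
  have key : ∀ y, ∃ ψ : T → ℝ≥0∞, Measurable ψ ∧
      ∀ E, MeasurableSet E → ∫⁻ t in E, ψ t ∂lam = ENNReal.ofReal (m E y) := by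
    intro y
    let μ : Measure T := Measure.ofMeasurable (fun E _ => ENNReal.ofReal (m E y))
      (by simp [hm.empty]) (by
        intro g hg hd
        have h := hm.hasSum_iUnion y hg hd
        rw [← h.tsum_eq, ENNReal.ofReal_tsum_of_nonneg (fun i => hm.nonneg _ _) h.summable])
    have hμ : ∀ E, MeasurableSet E → μ E = ENNReal.ofReal (m E y) := fun E hE =>
      Measure.ofMeasurable_apply E hE
    have hle : μ ≤ lam := by
      refine Measure.le_iff.2 fun E hE => ?_
      rw [hμ E hE, ← ofReal_measureReal]
      exact ENNReal.ofReal_le_ofReal (hm.le hE y)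
    have : IsFiniteMeasure μ := isFiniteMeasure_of_le lam hle
    refine ⟨μ.rnDeriv lam, Measure.measurable_rnDeriv _ _, fun E hE => ?_⟩
    rw [Measure.setLIntegral_rnDeriv (Measure.absolutelyContinuous_of_le hle), hμ E hE]
  choose ψ h1 h2 using key
  exact ⟨ψ, h1, h2⟩

/-- Shifting the mass `d` from `b` to `a` preserves relaxed selections, as long as `d` is dominated by
the masses at `a` and at `b` and does not change the marginals. -/
lemma IsRelaxedSelection.perturb [DecidableEq Y] (hm : IsRelaxedSelection lam A p m) {a b : Y}
    {d : Set T → ℝ} (hda : ∀ E, |d E| ≤ m E a) (hdb : ∀ E, |d E| ≤ m E b)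
    (hadd : ∀ E E', MeasurableSet E → MeasurableSet E' → Disjoint E E' →
      d (E ∪ E') = d E + d E') (h0 : d univ = 0) :
    IsRelaxedSelection lam A p
      (fun E y => m E y + ((if y = a then d E else 0) - (if y = b then d E else 0))) := by
  have hnn : ∀ E y, 0 ≤ m E y + ((if y = a then d E else 0) - (if y = b then d E else 0)) := by
    intro E y
    have h1 := hm.nonneg E y
    have h2 := hda E
    have h3 := hdb E
    rw [abs_le] at h2 h3
    split_ifs with h h' h' <;> (try subst h) <;> (try subst h') <;> linarith
  have hz : ∀ E y, m E y = 0 →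
      m E y + ((if y = a then d E else 0) - (if y = b then d E else 0)) = 0 := by
    intro E y h1
    have h2 := hda E
    have h3 := hdb E
    rw [abs_le] at h2 h3
    split_ifs with h h' h' <;> (try subst h) <;> (try subst h') <;> linarith
  refine ⟨fun E y hE => hz E y (hm.nonmeas E y hE), hnn, ?_, ?_, fun y => hz _ _ (hm.supp y), ?_⟩
  · intro E E' y hE hE' hd
    simp only [hm.add E E' y hE hE' hd, hadd E E' hE hE' hd]
    split_ifs <;> ring
  · intro E S hE
    -- Enlarging `S` to contain both `a` and `b` makes the two perturbations cancel.
    refine (Finset.sum_le_sum_of_subset_of_nonneg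
      (show S ⊆ S ∪ {a, b} from Finset.subset_union_left) fun y _ _ => hnn E y).trans ?_
    rw [Finset.sum_add_distrib, Finset.sum_sub_distrib, Finset.sum_ite_eq', Finset.sum_ite_eq']
    simpa using hm.sum_le E (S ∪ {a, b}) hE
  · intro y
    simp [h0, hm.total]

/-! ### Extreme relaxed selections are selections -/

/-- For an extreme relaxed selection the densities at two distinct points have a.e. disjoint
supports. Otherwise both are at least some `ε > 0` on a set `D` of positive measure; atomlessness
splits `D` into two parts of positive measure, and mass can be moved from `a` to `b` on one part and
from `b` to `a` on the other, or the reverse, exhibiting `m` as a proper midpoint. -/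
lemma IsRelaxedSelection.density_disjoint [IsProbabilityMeasure lam]
    (hatomless : AtomlessMeasure lam)
    (hm : m ∈ extremePoints ℝ {m : Set T → Y → ℝ | IsRelaxedSelection lam A p m})
    {ψ : Y → T → ℝ≥0∞} (hψ : ∀ y, Measurable (ψ y))
    (hψm : ∀ y E, MeasurableSet E → ∫⁻ t in E, ψ y t ∂lam = ENNReal.ofReal (m E y))
    {a b : Y} (hab : a ≠ b) : lam {t | ψ a t ≠ 0 ∧ ψ b t ≠ 0} = 0 := by
  classical
  have hr : IsRelaxedSelection lam A p m := hm.1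
  have hcover : {t | ψ a t ≠ 0 ∧ ψ b t ≠ 0} ⊆
      ⋃ k : ℕ, {t | ((k : ℝ≥0∞) + 1)⁻¹ ≤ ψ a t ∧ ((k : ℝ≥0∞) + 1)⁻¹ ≤ ψ b t} := by
    rintro t ⟨ha, hb⟩
    obtain ⟨k, hk⟩ := ENNReal.exists_inv_nat_lt (a := min (ψ a t) (ψ b t))
      (by simp [min_eq_iff, ha, hb])
    rw [lt_min_iff] at hk
    have : ((k : ℝ≥0∞) + 1)⁻¹ ≤ (k : ℝ≥0∞)⁻¹ := ENNReal.inv_le_inv.2 le_self_add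
    exact mem_iUnion.2 ⟨k, this.trans hk.1.le, this.trans hk.2.le⟩
  refine measure_mono_null hcover (measure_iUnion_null fun k => ?_)
  set D : Set T := {t | ((k : ℝ≥0∞) + 1)⁻¹ ≤ ψ a t ∧ ((k : ℝ≥0∞) + 1)⁻¹ ≤ ψ b t} with hD
  have hDm : MeasurableSet D :=
    (measurableSet_le measurable_const (hψ a)).inter (measurableSet_le measurable_const (hψ b))
  by_contra hpos
  obtain ⟨u, huD, hu, hu0, hult⟩ := hatomless D hDm (pos_iff_ne_zero.2 hpos)
  set v := D \ u with hv_def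
  have hv : MeasurableSet v := hDm.diff hu
  have huv : Disjoint u v := disjoint_sdiff_right
  have hu0' : 0 < lam.real u := ENNReal.toReal_pos hu0.ne' (measure_ne_top _ _)
  have hv0' : 0 < lam.real v := by
    rw [measureReal_sdiff huD hu, sub_pos]
    exact (ENNReal.toReal_lt_toReal (measure_ne_top _ _) (measure_ne_top _ _)).2 hult
  set ε : ℝ := ((k : ℝ) + 1)⁻¹ with hε
  have hε0 : 0 < ε := by positivity
  have hεE : ENNReal.ofReal ε = ((k : ℝ≥0∞) + 1)⁻¹ := by
    rw [hε, ENNReal.ofReal_inv_of_pos (by positivity), ENNReal.ofReal_add (by positivity) one_pos.le]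
    simp
  have hlow : ∀ y, (∀ t ∈ D, ((k : ℝ≥0∞) + 1)⁻¹ ≤ ψ y t) → ∀ B, MeasurableSet B →
      ε * lam.real (B ∩ D) ≤ m B y := by
    intro y hy B hB
    have h1 : ENNReal.ofReal ε * lam (B ∩ D) ≤ ENNReal.ofReal (m B y) := by
      rw [← hψm y B hB, hεE, ← setLIntegral_const]
      exact (setLIntegral_mono (hψ y) fun t ht => hy t ht.2).trans
        (lintegral_mono_set inter_subset_left)
    rw [← ofReal_measureReal (μ := lam), ← ENNReal.ofReal_mul hε0.le] at h1
    exact (ENNReal.ofReal_le_ofReal_iff (hr.nonneg _ _)).1 h1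
  -- The weights `lam v` and `lam u` make the total mass of `d` vanish.
  let d : Set T → ℝ := fun B => if MeasurableSet B then
    ε * (lam.real v * lam.real (B ∩ u) - lam.real u * lam.real (B ∩ v)) else 0
  have hd : ∀ y, (∀ t ∈ D, ((k : ℝ≥0∞) + 1)⁻¹ ≤ ψ y t) → ∀ B, |d B| ≤ m B y := by
    intro y hy B
    by_cases hB : MeasurableSet B
    · refine le_trans ?_ (hlow y hy B hB)
      simp only [d, if_pos hB, abs_mul, abs_of_pos hε0]
      have hsplit : lam.real (B ∩ D) = lam.real (B ∩ u) + lam.real (B ∩ v) := by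
        rw [← measureReal_union (huv.mono inter_subset_right inter_subset_right) (hB.inter hv),
          ← inter_union_distrib_left, hv_def, union_sdiff_cancel huD]
      rw [hsplit]
      refine mul_le_mul_of_nonneg_left ?_ hε0.le
      have h1 : lam.real v ≤ 1 := measureReal_le_one
      have h2 : lam.real u ≤ 1 := measureReal_le_one
      have h3 : 0 ≤ lam.real (B ∩ u) := measureReal_nonneg
      have h4 : 0 ≤ lam.real (B ∩ v) := measureReal_nonneg
      rw [abs_le]
      constructor <;> nlinarith
    · simp only [d, if_neg hB, abs_zero]
      exact hr.nonneg _ _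
  have hda := hd a fun t ht => ht.1
  have hdb := hd b fun t ht => ht.2
  have hadd : ∀ E E', MeasurableSet E → MeasurableSet E' → Disjoint E E' →
      d (E ∪ E') = d E + d E' := by
    intro E E' hE hE' hEE'
    simp only [d, if_pos hE, if_pos hE', if_pos (hE.union hE'), union_inter_distrib_right]
    rw [measureReal_union (hEE'.mono inter_subset_left inter_subset_left) (hE'.inter hu),
      measureReal_union (hEE'.mono inter_subset_left inter_subset_left) (hE'.inter hv)]
    ring
  have h0 : d univ = 0 := by
    simp only [d, if_pos MeasurableSet.univ, univ_inter]; ring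
  have hplus := hr.perturb hda hdb hadd h0
  have hminus := hr.perturb (d := fun E => -d E) (by simpa using hda) (by simpa using hdb)
    (fun E E' hE hE' h => by rw [hadd E E' hE hE' h]; ring) (by simp [h0])
  have heq := hm.2 hplus hminus ⟨1 / 2, 1 / 2, by norm_num, by norm_num, by norm_num, by
    ext E y
    simp only [Pi.add_apply, Pi.smul_apply, smul_eq_mul]
    split_ifs <;> ring⟩
  have h1 := congrFun (congrFun heq u) a
  simp only [if_neg hab, if_true, d, if_pos hu, inter_self, huv.inter_eq, measureReal_empty] at h1
  have h2 : 0 < ε * (lam.real v * lam.real u) := by positivity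
  linarith

/-- Purification: on an atomless space, the marginal of a relaxed selection is the law of a genuine
measurable selection. -/
lemma IsRelaxedSelection.exists_selection [Countable Y] [MeasurableSpace Y]
    [MeasurableSingletonClass Y] [IsProbabilityMeasure lam] (hatomless : AtomlessMeasure lam)
    (hA : ∀ y, MeasurableSet (A y)) (ν : Measure Y) [IsProbabilityMeasure ν]
    (hm : IsRelaxedSelection lam A (fun y => ν.real {y}) m) :
    ∃ f : T → Y, Measurable f ∧ (∀ᵐ t ∂lam, t ∈ A (f t)) ∧ ν = lam.map f := by
  classical
  obtain ⟨m, hme⟩ := isCompact_setOf_isRelaxedSelection.extremePoints_nonempty ⟨m, hm⟩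
  have hr : IsRelaxedSelection lam A (fun y => ν.real {y}) m := hme.1
  obtain ⟨ψ, hψ, hψm⟩ := hr.exists_density
  have hmass : ∀ y, ∫⁻ t, ψ y t ∂lam = ν {y} := by
    intro y
    rw [← setLIntegral_univ, hψm y _ .univ, hr.total, ofReal_measureReal]
  have hνsum : ∑' y, ν {y} = 1 := by
    rw [← measure_univ (μ := ν), ← biUnion_of_singleton (univ : Set Y),
      measure_biUnion (to_countable _) (fun i _ j _ hij => by simpa using hij)
        (fun _ _ => measurableSet_singleton _)]
    exact (tsum_univ (fun y => ν {y})).symm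
  have hsum_le : ∀ E, MeasurableSet E → ∫⁻ t in E, ∑' y, ψ y t ∂lam ≤ lam E := by
    intro E hE
    rw [lintegral_tsum fun y => (hψ y).aemeasurable]
    rw [ENNReal.tsum_eq_iSup_sum]
    refine iSup_le fun S => ?_
    simp only [hψm _ E hE]
    rw [← ENNReal.ofReal_sum_of_nonneg fun y _ => hr.nonneg _ _, ← ofReal_measureReal (μ := lam)]
    exact ENNReal.ofReal_le_ofReal (hr.sum_le E S hE)
  have hsumm : Measurable fun t => ∑' y, ψ y t := Measurable.tsum hψ
  have hle1 : ∀ᵐ t ∂lam, ∑' y, ψ y t ≤ 1 := by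
    refine ae_le_of_forall_setLIntegral_le_of_sigmaFinite hsumm fun E hE _ => ?_
    simpa using hsum_le E hE
  have hone : ∀ᵐ t ∂lam, ∑' y, ψ y t = 1 := by
    have h1 : ∫⁻ t, ∑' y, ψ y t ∂lam = 1 := by
      rw [lintegral_tsum fun y => (hψ y).aemeasurable]
      simp only [hmass, hνsum]
    exact ae_eq_of_ae_le_of_lintegral_le hle1 (by simp [h1]) (by fun_prop) (by simp [h1])
  have hdisj : ∀ᵐ t ∂lam, ∀ a b, a ≠ b → ¬ (ψ a t ≠ 0 ∧ ψ b t ≠ 0) := by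
    rw [ae_all_iff]; intro a
    rw [ae_all_iff]; intro b
    by_cases hab : a = b
    · simp [hab]
    · have := IsRelaxedSelection.density_disjoint hatomless hme hψ hψm hab
      have h2 : ∀ᵐ t ∂lam, ¬ (ψ a t ≠ 0 ∧ ψ b t ≠ 0) := by
        rw [ae_iff]; simpa using this
      filter_upwards [h2] with t ht _ using ht
  have hsupp : ∀ᵐ t ∂lam, ∀ y, t ∉ A y → ψ y t = 0 := by
    rw [ae_all_iff]; intro y
    have h1 : ∫⁻ t in (A y)ᶜ, ψ y t ∂lam = 0 := by
      rw [hψm y _ (hA y).compl, hr.supp, ENNReal.ofReal_zero]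
    rw [lintegral_eq_zero_iff (hψ y), Filter.EventuallyEq, ae_restrict_iff' (hA y).compl] at h1
    exact h1
  -- Almost everywhere exactly one density is nonzero, and it equals `1`; its index is the selection.
  let N : Set T := {t | ∃! y, ψ y t ≠ 0}
  have hN : ∀ᵐ t ∂lam, t ∈ N ∧ ∀ y, ψ y t ≠ 0 → ψ y t = 1 := by
    filter_upwards [hone, hdisj] with t h1 h2
    have hex : ∃ y, ψ y t ≠ 0 := by
      by_contra! hcon
      simp [hcon] at h1
    obtain ⟨y, hy⟩ := hex
    have huniq : ∀ z, ψ z t ≠ 0 → z = y := fun z hz => by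
      by_contra hzy
      exact h2 z y hzy ⟨hz, hy⟩
    refine ⟨⟨y, hy, huniq⟩, fun z hz => ?_⟩
    rw [← h1, tsum_eq_single z fun w hw => ?_]
    by_contra hw0
    exact hw ((huniq w hw0).trans (huniq z hz).symm)
  obtain ⟨t0, ht0, -⟩ := hN.exists
  obtain ⟨y0, -⟩ := ht0
  have hBm : ∀ y, MeasurableSet {t | ψ y t ≠ 0} := fun y =>
    (measurableSet_singleton (0 : ℝ≥0∞)).compl.preimage (hψ y)
  have hNm : MeasurableSet N := by
    have : N = ⋃ y, ({t | ψ y t ≠ 0} ∩ ⋂ z, {t | ψ z t ≠ 0 → z = y}) := by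
      ext t
      simp [N, ExistsUnique]
    rw [this]
    refine MeasurableSet.iUnion fun y => (hBm y).inter (MeasurableSet.iInter fun z => ?_)
    by_cases hzy : z = y
    · simp [hzy]
    · convert (hBm z).compl using 1
      ext t; simp [hzy]
  let f : T → Y := fun t => if h : t ∈ N then h.choose else y0
  have hfN : ∀ t ∈ N, ∀ y, f t = y ↔ ψ y t ≠ 0 := by
    intro t ht y
    have hf : f t = ht.choose := dif_pos ht
    have hs := ht.choose_spec
    rw [hf]
    exact ⟨fun h => h ▸ hs.1, fun h => (hs.2 y h).symm⟩
  have hfm : Measurable f := by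
    refine measurable_to_countable' fun y => ?_
    have : f ⁻¹' {y} = (N ∩ {t | ψ y t ≠ 0}) ∪ (Nᶜ ∩ {_t | y0 = y}) := by
      ext t
      by_cases ht : t ∈ N
      · simp [ht, hfN t ht y]
      · simp [ht, f]
    rw [this]
    exact (hNm.inter (hBm y)).union (hNm.compl.inter (MeasurableSet.const _))
  refine ⟨f, hfm, ?_, ?_⟩
  · filter_upwards [hN, hsupp] with t ht hs
    by_contra hcon
    exact (hfN t ht.1 (f t)).1 rfl (hs _ hcon)
  · refine Measure.ext_iff_singleton.2 fun y => ?_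
    rw [Measure.map_apply hfm (measurableSet_singleton y), ← hmass y,
      ← lintegral_indicator_one (hfm (measurableSet_singleton y))]
    refine lintegral_congr_ae ?_
    filter_upwards [hN] with t ht
    by_cases hy : f t = y
    · have : t ∈ f ⁻¹' {y} := hy
      rw [indicator_of_mem this, ht.2 y ((hfN t ht.1 y).1 hy)]; rfl
    · have : t ∉ f ⁻¹' {y} := hy
      rw [indicator_of_notMem this]
      by_contra hne
      exact hy ((hfN t ht.1 y).2 hne)

end relaxed

/-! ### Limits of sequences of selections -/

section limit

/-- In a countable metric space only countably many radii are distances from `y`; a ball around `y`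
of any other radius is clopen. -/
lemma exists_isClopen_radius {Y : Type*} [MetricSpace Y] [Countable Y] (y : Y) {r : ℝ}
    (hr : 0 < r) : ∃ B : Set Y, IsClopen B ∧ y ∈ B ∧ B ⊆ Metric.ball y r := by
  have hc : (range fun z => dist z y).Countable := countable_range _
  have hIoo : ¬ (Ioo 0 r).Countable := Cardinal.Real.Ioo_countable_iff.not.2 (by simpa using hr)
  obtain ⟨s, hs, hsr⟩ := not_subset.1 fun h => hIoo (hc.mono h)
  refine ⟨Metric.ball y s, ⟨?_, Metric.isOpen_ball⟩, Metric.mem_ball_self hs.1,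
    Metric.ball_subset_ball hs.2.le⟩
  have : Metric.ball y s = Metric.closedBall y s := by
    refine Metric.ball_subset_closedBall.antisymm fun z hz => ?_
    exact lt_of_le_of_ne hz fun h => hsr ⟨z, h⟩
  rw [this]
  exact Metric.isClosed_closedBall

lemma exists_tendsto_ultrafilter (𝒰 : Ultrafilter ℕ) {u : ℕ → ℝ}
    (hu : ∀ n, u n ∈ Icc (0 : ℝ) 1) :
    ∃ l, Tendsto u 𝒰 (𝓝 l) := by
  have h : (𝒰.map u : Filter ℝ) ≤ 𝓟 (Icc 0 1) :=
    tendsto_principal.2 (Eventually.of_forall hu)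
  obtain ⟨l, -, hl⟩ := isCompact_Icc.ultrafilter_le_nhds (𝒰.map u) h
  exact ⟨l, hl⟩

/-- If `lam ∘ (f n)⁻¹` converges weakly to `ν'`, and almost every `t ∉ A y` admits a neighbourhood of
`y` that `f n t` eventually avoids, then `ν'` is the marginal of a relaxed selection of `A`. With
`B y k` clopen neighbourhoods shrinking to `y`, the relaxed selection is the iterated limit of
`lam (E ∩ (f n)⁻¹ (B y k))`, first in `n` and then in `k`. Taking `k → ∞` last matters because the
mass of `f n` may accumulate at `y` without `f n` ever taking the value `y`. -/
lemma exists_isRelaxedSelection_of_tendsto {T Y : Type*} [MeasurableSpace T] [MetricSpace Y]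
    [Countable Y] [MeasurableSpace Y] [BorelSpace Y] {lam : Measure T} [IsProbabilityMeasure lam]
    {𝒰 : Ultrafilter ℕ} (h𝒰 : (𝒰 : Filter ℕ) ≤ atTop) {f : ℕ → T → Y} (hf : ∀ n, Measurable (f n))
    {ν : ℕ → ProbabilityMeasure Y} (hν : ∀ n, (ν n : Measure Y) = lam.map (f n))
    {ν' : ProbabilityMeasure Y} (hlim : Tendsto ν 𝒰 (𝓝 ν'))
    {A : Y → Set T} (hA : ∀ y, MeasurableSet (A y))
    (hfA : ∀ y, ∀ᵐ t ∂lam, t ∉ A y →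
      ∃ k : ℕ, ∀ n ≥ k, f n t ∉ Metric.ball y (1 / ((k : ℝ) + 1))) :
    ∃ m, IsRelaxedSelection lam A (fun y => (ν' : Measure Y).real {y}) m := by
  classical
  have hrad : ∀ k : ℕ, (0 : ℝ) < 1 / ((k : ℝ) + 1) := fun k => by positivity
  choose B hBclopen hyB hBball using fun (y : Y) (k : ℕ) => exists_isClopen_radius y (hrad k)
  have hBm : ∀ y k, MeasurableSet (B y k) := fun y k => (hBclopen y k).isOpen.measurableSet
  have hpm : ∀ y k n, MeasurableSet (f n ⁻¹' B y k) := fun y k n => hf n (hBm y k)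
  have h01 : ∀ E : Set T, lam.real E ∈ Icc (0 : ℝ) 1 := fun E =>
    ⟨measureReal_nonneg, measureReal_le_one⟩
  choose L hL using fun (E : Set T) (y : Y) (k : ℕ) =>
    exists_tendsto_ultrafilter 𝒰 (u := fun n => lam.real (E ∩ f n ⁻¹' B y k)) fun n => h01 _
  have hL01 : ∀ E y k, L E y k ∈ Icc (0 : ℝ) 1 := fun E y k =>
    isClosed_Icc.mem_of_tendsto (hL E y k) (Eventually.of_forall fun n => h01 _)
  choose M hM using fun (E : Set T) (y : Y) => exists_tendsto_ultrafilter 𝒰 (hL01 E y)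
  have hLadd : ∀ E E' y k, MeasurableSet E' → Disjoint E E' →
      L (E ∪ E') y k = L E y k + L E' y k := by
    intro E E' y k hE' hd
    refine tendsto_nhds_unique (hL _ y k) (((hL E y k).add (hL E' y k)).congr fun n => ?_)
    rw [union_inter_distrib_right, measureReal_union (hd.mono inter_subset_left inter_subset_left)
      (hE'.inter (hpm y k n))]
  refine ⟨fun E y => if MeasurableSet E then M E y else 0, ?_, ?_, ?_, ?_, ?_, ?_⟩
  · intro E y hE; exact if_neg hE
  · intro E y
    split_ifs
    · exact ge_of_tendsto' (hM E y) fun k => (hL01 E y k).1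
    · exact le_rfl
  · intro E E' y hE hE' hd
    simp only [if_pos hE, if_pos hE', if_pos (hE.union hE')]
    exact tendsto_nhds_unique (hM _ y)
      (((hM E y).add (hM E' y)).congr fun k => (hLadd E E' y k hE' hd).symm)
  · intro E S hE
    simp only [if_pos hE]
    have hdisj : ∀ᶠ k : ℕ in atTop, (S : Set Y).PairwiseDisjoint fun y => B y k := by
      have h1 : ∀ y ∈ S, ∀ z ∈ S, ∀ᶠ k : ℕ in atTop, y ≠ z → Disjoint (B y k) (B z k) := by
        intro y _ z _
        by_cases hyz : y = z
        · simp [hyz]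
        · have hd : 0 < dist y z / 2 := by have := dist_pos.2 hyz; positivity
          filter_upwards [tendsto_one_div_add_atTop_nhds_zero_nat.eventually_lt_const hd]
            with k hk _
          refine (Metric.ball_disjoint_ball ?_).mono (hBball y k) (hBball z k)
          linarith
      have h2 := (S.eventually_all (l := atTop)).2 fun y hy =>
        (S.eventually_all (l := atTop)).2 fun z hz => h1 y hy z hz
      filter_upwards [h2] with k hk y hy z hz hyz using hk y hy z hz hyz
    refine le_of_tendsto (tendsto_finsetSum S fun y _ => hM E y) (h𝒰 ?_)
    filter_upwards [hdisj] with k hk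
    refine le_of_tendsto' (tendsto_finsetSum S fun y _ => hL E y k) fun n => ?_
    rw [← measureReal_biUnion_finset]
    · exact measureReal_mono (iUnion₂_subset fun y _ => inter_subset_left)
    · intro y hy z hz hyz
      exact ((hk hy hz hyz).preimage (f n)).mono inter_subset_right inter_subset_right
    · exact fun y _ => hE.inter (hpm y k n)
  · intro y
    simp only [if_pos (hA y).compl]
    -- `R K` is the set of `t ∉ A y` for which no `k ≤ K` witnesses the avoidance property; it
    -- bounds `L (A y)ᶜ y k` for every `k ≥ K`, and its measure tends to `0`.
    let R : ℕ → Set T := fun K => ⋂ k ∈ Iic K, ⋃ n ∈ Ici k,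
      (A y)ᶜ ∩ f n ⁻¹' Metric.ball y (1 / ((k : ℝ) + 1))
    have hRm : ∀ K, MeasurableSet (R K) := fun K =>
      MeasurableSet.biInter (to_countable _) fun k _ =>
        MeasurableSet.biUnion (to_countable _) fun n _ =>
          (hA y).compl.inter (hf n Metric.isOpen_ball.measurableSet)
    have hRanti : Antitone R := fun a b hab =>
      biInter_subset_biInter_left (Iic_subset_Iic.2 hab)
    have hR0 : lam (⋂ K, R K) = 0 := by
      refine measure_mono_null (fun t ht => ?_) (ae_iff.1 (hfA y))
      simp only [R, mem_iInter, mem_iUnion, mem_Iic, mem_Ici, exists_prop] at ht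
      intro hcon
      obtain ⟨_, _, htA, _⟩ := ht 0 0 le_rfl
      obtain ⟨k, hk⟩ := hcon htA
      obtain ⟨n, hn, _, hn'⟩ := ht k k le_rfl
      exact hk n hn hn'
    have hRlim : Tendsto (fun K => lam.real (R K)) atTop (𝓝 0) := by
      have := tendsto_measure_iInter_atTop (μ := lam) (fun n => (hRm n).nullMeasurableSet) hRanti
        ⟨0, measure_ne_top _ _⟩
      rw [hR0] at this
      have h := (ENNReal.tendsto_toReal ENNReal.zero_ne_top).comp this
      rw [ENNReal.toReal_zero] at h
      exact h
    refine le_antisymm (ge_of_tendsto' hRlim fun K => ?_)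
      (ge_of_tendsto' (hM _ y) fun k => (hL01 _ y k).1)
    refine le_of_tendsto (hM _ y) (h𝒰 ?_)
    filter_upwards [eventually_ge_atTop K] with k hk
    refine le_of_tendsto (hL _ y k) (h𝒰 ?_)
    filter_upwards [eventually_ge_atTop K] with n hn
    refine measureReal_mono fun t ht => ?_
    simp only [R, mem_iInter, mem_iUnion, mem_Iic, mem_Ici, exists_prop]
    intro j hj
    refine ⟨n, hj.trans hn, ht.1, Metric.ball_subset_ball ?_ (hBball y k ht.2)⟩
    exact one_div_le_one_div_of_le (by positivity) (by exact_mod_cast Nat.succ_le_succ (hj.trans hk))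
  · intro y
    simp only [if_pos MeasurableSet.univ]
    have hLν : ∀ k, L univ y k = (ν' : Measure Y).real (B y k) := by
      intro k
      refine tendsto_nhds_unique (hL univ y k) ?_
      have h := (NNReal.continuous_coe.tendsto _).comp
        (ProbabilityMeasure.tendsto_measure_of_isClopen_of_tendsto hlim (hBclopen y k))
      refine Tendsto.congr (fun n => ?_) h
      rw [univ_inter, ← map_measureReal_apply (hf n) (hBm y k), ← hν n]
      rfl
    have hball : Tendsto (fun k : ℕ => (ν' : Measure Y).real (Metric.closedBall y (1 / ((k : ℝ) + 1))))
        atTop (𝓝 ((ν' : Measure Y).real {y})) := by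
      have hanti : Antitone fun k : ℕ => Metric.closedBall y (1 / ((k : ℝ) + 1)) := fun a b hab =>
        Metric.closedBall_subset_closedBall (one_div_le_one_div_of_le (by positivity) (by gcongr))
      have hI : ⋂ k : ℕ, Metric.closedBall y (1 / ((k : ℝ) + 1)) = {y} := by
        ext z
        simp only [mem_iInter, Metric.mem_closedBall, mem_singleton_iff]
        constructor
        · intro h
          refine dist_le_zero.1 (ge_of_tendsto' tendsto_one_div_add_atTop_nhds_zero_nat h)
        · rintro rfl k
          rw [dist_self]; exact (hrad k).le
      have := tendsto_measure_iInter_atTop (μ := (ν' : Measure Y))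
        (fun k : ℕ => Metric.isClosed_closedBall.measurableSet.nullMeasurableSet) hanti
        ⟨0, measure_ne_top _ _⟩
      rw [hI] at this
      exact (ENNReal.tendsto_toReal (measure_ne_top _ _)).comp this
    refine tendsto_nhds_unique (hM univ y) (tendsto_of_tendsto_of_tendsto_of_le_of_le
      tendsto_const_nhds (hball.mono_left h𝒰) (fun k => ?_) fun k => ?_)
    · rw [hLν]; exact measureReal_mono (singleton_subset_iff.2 (hyB y k))
    · rw [hLν]; exact measureReal_mono ((hBball y k).trans Metric.ball_subset_closedBall)

/-- A sequence of measurable functions with values in the compact sets `H t` has tight laws. No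
measurability of `H` is needed: for each `j` the sets of `t` at which every `f n t` lies in the union
of the first `k` balls of radius `1 / (j + 1)` are measurable and exhaust almost all of `T`
as `k → ∞`, because `H t` is compact. -/
lemma isTightMeasureSet_map {T Y : Type*} [MeasurableSpace T] [MetricSpace Y] [Countable Y]
    [CompleteSpace Y] [MeasurableSpace Y] [BorelSpace Y] {lam : Measure T}
    [IsProbabilityMeasure lam] {f : ℕ → T → Y} (hf : ∀ n, Measurable (f n)) {H : T → Set Y}
    (hH : ∀ t, IsCompact (H t)) (hfH : ∀ᵐ t ∂lam, ∀ n, f n t ∈ H t) :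
    IsTightMeasureSet (range fun n => lam.map (f n)) := by
  have : Nonempty Y := by
    obtain ⟨t, -⟩ := hfH.exists
    exact ⟨f 0 t⟩
  obtain ⟨e, he⟩ := exists_surjective_nat Y
  rw [isTightMeasureSet_iff_exists_isCompact_measure_compl_le]
  intro ε hε
  obtain ⟨δ, hδ0, hδ⟩ := ENNReal.exists_pos_sum_of_countable' hε.ne' ℕ
  let C : ℕ → ℕ → Set Y := fun j k => ⋃ i ∈ Iic k, Metric.closedBall (e i) (1 / ((j : ℝ) + 1))
  have hC : ∀ j k, IsClosed (C j k) := fun j k =>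
    (finite_Iic k).isClosed_biUnion fun i _ => Metric.isClosed_closedBall
  have hCmono : ∀ j, Monotone (C j) := fun j a b hab =>
    biUnion_subset_biUnion_left (Iic_subset_Iic.2 hab)
  let R : ℕ → ℕ → Set T := fun j k => ⋃ n, f n ⁻¹' (C j k)ᶜ
  have hRm : ∀ j k, MeasurableSet (R j k) := fun j k =>
    MeasurableSet.iUnion fun n => hf n (hC j k).measurableSet.compl
  have hk : ∀ j, ∃ k, lam (R j k) ≤ δ j := by
    intro j
    have hanti : Antitone (R j) := fun a b hab =>
      iUnion_mono fun n => preimage_mono (compl_subset_compl.2 (hCmono j hab))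
    have hnull : lam (⋂ k, R j k) = 0 := by
      refine measure_mono_null (fun t ht => ?_) (ae_iff.1 hfH)
      intro hcon
      obtain ⟨k, hkc⟩ := (hH t).elim_directed_cover
        (fun k => ⋃ i ∈ Iic k, Metric.ball (e i) (1 / ((j : ℝ) + 1)))
        (fun k => isOpen_biUnion fun i _ => Metric.isOpen_ball)
        (fun y _ => by
          obtain ⟨i, rfl⟩ := he y
          simp only [mem_iUnion]
          exact ⟨i, i, le_refl i, Metric.mem_ball_self (by positivity)⟩)
        (Monotone.directed_le fun a b hab => biUnion_subset_biUnion_left (Iic_subset_Iic.2 hab))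
      obtain ⟨n, hn⟩ := mem_iUnion.1 (mem_iInter.1 ht k)
      exact hn (iUnion₂_mono (fun i _ => Metric.ball_subset_closedBall) (hkc (hcon n)))
    have := tendsto_measure_iInter_atTop (μ := lam) (fun k => (hRm j k).nullMeasurableSet) hanti
      ⟨0, measure_ne_top _ _⟩
    rw [hnull] at this
    exact (this.eventually_le_const (hδ0 j)).exists
  choose k hk using hk
  refine ⟨⋂ j, C j (k j), isCompact_iff_totallyBounded_isComplete.2
    ⟨?_, (isClosed_iInter fun j => hC _ _).isComplete⟩, ?_⟩
  · refine Metric.totallyBounded_iff.2 fun r hr => ?_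
    obtain ⟨j, hj⟩ := exists_nat_one_div_lt hr
    refine ⟨e '' Iic (k j), (finite_Iic _).image e, (iInter_subset _ j).trans ?_⟩
    rw [biUnion_image]
    exact iUnion₂_mono fun i _ => Metric.closedBall_subset_ball hj
  · rintro _ ⟨n, rfl⟩
    rw [Measure.map_apply (hf n) (isClosed_iInter fun j => hC _ _).measurableSet.compl,
      compl_iInter, preimage_iUnion]
    calc lam (⋃ j, f n ⁻¹' (C j (k j))ᶜ) ≤ ∑' j, lam (f n ⁻¹' (C j (k j))ᶜ) :=
          measure_iUnion_le _
      _ ≤ ∑' j, δ j := ENNReal.tsum_le_tsum fun j =>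
          (measure_mono (subset_iUnion (fun n => f n ⁻¹' (C j (k j))ᶜ) n)).trans (hk j)
      _ ≤ ε := hδ.le

end limit

/-! ### Upper semicontinuity -/

theorem stmt_7 {T X Y : Type*} [MeasurableSpace T] [MetricSpace X]
    [MetricSpace Y] [Countable Y] [CompleteSpace Y] [MeasurableSpace Y] [BorelSpace Y]
    (lam : Measure T) [IsProbabilityMeasure lam] (hatomless : AtomlessMeasure lam)
    (F : T → X → Set Y)
    (hmeas : ∀ x : X, ∀ C : Set Y, IsClosed C → MeasurableSet {t : T | (F t x ∩ C).Nonempty})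
    (hcomp : ∀ t x, IsCompact (F t x))
    (husc : ∀ t : T, UpperSemicontinuousCorr (fun x => F t x))
    (H : T → Set Y) (hHcomp : ∀ t, IsCompact (H t))
    (hFH : ∀ t x, F t x ⊆ H t) :
    UpperSemicontinuousCorr (fun x => distrOfSelections lam (fun t => F t x)) := by
  intro x V hV hxV
  by_contra! hcon
  have hseq : ∀ k : ℕ, ∃ y, dist y x < 1 / ((k : ℝ) + 1) ∧
      ∃ ν ∈ distrOfSelections lam (fun t => F t y), ν ∉ V := by
    intro k
    obtain ⟨y, hy, hyV⟩ := hcon (Metric.ball x (1 / ((k : ℝ) + 1))) Metric.isOpen_ball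
      (Metric.mem_ball_self (by positivity))
    exact ⟨y, hy, Set.not_subset.1 hyV⟩
  choose xs hxs ν hνmem hνV using hseq
  choose f hf hfF hνf using hνmem
  have hxlim : Tendsto xs atTop (𝓝 x) := tendsto_iff_dist_tendsto_zero.2
    (squeeze_zero (fun _ => dist_nonneg) (fun k => (hxs k).le)
      tendsto_one_div_add_atTop_nhds_zero_nat)
  have hfF' : ∀ᵐ t ∂lam, ∀ n, f n t ∈ F t (xs n) := ae_all_iff.2 hfF
  have htight := isTightMeasureSet_map hf hHcomp
    (by filter_upwards [hfF'] with t ht n using hFH _ _ (ht n))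
  have hcompact : IsCompact (closure (Set.range ν)) := by
    refine isCompact_closure_of_isTightMeasureSet (htight.subset ?_)
    rintro _ ⟨_, ⟨n, rfl⟩, rfl⟩
    exact ⟨n, (hνf n).symm⟩
  let 𝒰 : Ultrafilter ℕ := hyperfilter ℕ
  obtain ⟨ν', -, hlim⟩ := hcompact.ultrafilter_le_nhds (𝒰.map ν)
    (tendsto_principal.2 (Eventually.of_forall fun n => subset_closure ⟨n, rfl⟩))
  have hlim : Tendsto ν 𝒰 (𝓝 ν') := hlim
  let A : Y → Set T := fun y => {t | y ∈ F t x}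
  have hA : ∀ y, MeasurableSet (A y) := by
    intro y
    simpa [A, Set.inter_singleton_nonempty] using hmeas x {y} isClosed_singleton
  have hfA : ∀ y, ∀ᵐ t ∂lam, t ∉ A y →
      ∃ k : ℕ, ∀ n ≥ k, f n t ∉ Metric.ball y (1 / ((k : ℝ) + 1)) := by
    intro y
    filter_upwards [hfF'] with t ht hty
    -- `F t x` misses a closed ball around `y`; by upper semicontinuity so does `F t (xs n)`,
    -- eventually in `n`.
    obtain ⟨r, hr, hrF⟩ := Metric.isOpen_iff.1 (hcomp t x).isClosed.isOpen_compl y hty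
    obtain ⟨U, hU, hxU, hUF⟩ := husc t x (Metric.closedBall y (r / 2))ᶜ
      Metric.isClosed_closedBall.isOpen_compl fun z hz hz' =>
        hrF (Metric.closedBall_subset_ball (half_lt_self hr) hz') hz
    obtain ⟨N, hN⟩ := eventually_atTop.1 (hxlim.eventually (hU.mem_nhds hxU))
    obtain ⟨k, hk⟩ := exists_nat_one_div_lt (half_pos hr)
    refine ⟨max N k, fun n hn hb => hUF _ (hN n ((le_max_left _ _).trans hn)) (ht n) ?_⟩
    refine Metric.ball_subset_closedBall (Metric.ball_subset_ball ?_ hb)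
    refine le_trans (one_div_le_one_div_of_le (by positivity) ?_) hk.le
    gcongr
    exact le_max_right _ _
  -- By purification, `ν'` is the law of a selection of `F · x`.
  obtain ⟨m, hm⟩ := exists_isRelaxedSelection_of_tendsto Nat.hyperfilter_le_atTop hf hνf hlim hA hfA
  obtain ⟨g, hg, hgA, hνg⟩ := hm.exists_selection hatomless hA (ν' : Measure Y)
  have hmem : ν' ∈ V := hxV ⟨g, hg, hgA, hνg⟩
  obtain ⟨n, hn⟩ := (hlim.eventually (hV.mem_nhds hmem)).exists
  exact hνV n hn
end

section
/- Let Y be a countable complete metric space and (T, 𝒯, λ) an atomless probability space. Let X be a metric space and F : T × X → 2^Y satisfy: for each x, F(·,x) is measurable with nonempty compact values; for each t, F(t,·) is upper semicontinuous; and F(t,x) ⊆ H(t) for a compact-valued correspondence H. Then the correspondence Φ : X → 2^{M(Y)} defined by Φ(x) = D_{F_x} is upper semicontinuous with nonempty compact convex values. -/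
/-!
The heart of the proof is a measure-theoretic marriage theorem (due to Bollobás and Varopoulos): if
`lam` is atomless, `Y` is countable and `G : T → Set Y` has measurable fibres `{t | y ∈ G t}`, then
a probability measure `ν` on `Y` is the law of a measurable a.e. selection of `G` if and only if
Hall's condition `ν I ≤ lam {t | G t ∩ I ≠ ∅}` holds for every finite `I ⊆ Y`
(`mem_distrOfSelections_iff`). Hall's condition is affine in `ν`, which gives convexity at once, and
it behaves well under weak limits, which gives compactness and upper semicontinuity.

The marriage theorem is proved by shrinking, in the style of Rado's proof of Hall's theorem. Among
all families `B y ⊆ {t | y ∈ G t}` which still satisfy Hall's condition, take a minimal one: it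
exists because Hall's condition for finite `I` passes to decreasing countable intersections. If some
`B y` had mass larger than `ν {y}`, submodularity of `I ↦ lam (⋃ i ∈ I, B i)` and atomlessness would
produce a non-null piece of `B y` whose removal preserves Hall's condition (`exists_removable`). So
`lam (B y) = ν {y}` for all `y`; Hall's condition for pairs then makes the `B y` almost disjoint,
they cover almost all of `T` because `ν` has mass one, and sending `B y` to `y` is the desired
selection.

For compactness and upper semicontinuity, let `u n → x` and let `ν n` be the law of a selection of
`F · (u n)`. For each `t` the set `K t = F t x ∪ ⋃ n, F t (u n)` is compact, by upper semicontinuity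
along the compact set `{x} ∪ {u n}`. Laws of selections of a compact-valued random set are tight
(`isTightMeasureSet_distrOfSelections`), so by Prokhorov's theorem a subsequence converges weakly to
some `μ`. The portmanteau theorem on thickenings of a finite set `I`, and upper semicontinuity of
`F t`, give Hall's condition for `μ` and `F · x`; hence `μ` is again the law of a selection
(`exists_subseq_tendsto_distr`). The weak topology on `ProbabilityMeasure Y` is metrizable, so this
sequential statement suffices for both claims. The union `K` replaces the bound `H`, about whose
measurability nothing is assumed.
-/

open MeasureTheory
open scoped NNReal

open Set Filter Topology
open scoped ENNReal

/-! ### The marriage theorem for an atomless measure -/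

lemma AtomlessMeasure.exists_small_s12 {T : Type*} [MeasurableSpace T] {lam : Measure T}
    [IsFiniteMeasure lam] (h : AtomlessMeasure lam) {s : Set T} (hs : MeasurableSet s)
    (hpos : 0 < lam.real s) {ε : ℝ} (hε : 0 < ε) :
    ∃ D, D ⊆ s ∧ MeasurableSet D ∧ 0 < lam.real D ∧ lam.real D < ε := by
  have key : ∀ n : ℕ, ∃ D, D ⊆ s ∧ MeasurableSet D ∧ 0 < lam.real D ∧
      lam.real D ≤ lam.real s * (1 / 2) ^ n := by
    intro n
    induction n with
    | zero => exact ⟨s, subset_rfl, hs, hpos, by simp⟩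
    | succ n ih =>
      obtain ⟨D, hDs, hD, hD0, hDn⟩ := ih
      obtain ⟨u, huD, hu, hu0, hult⟩ := h D hD (by
        rw [Measure.real, ENNReal.toReal_pos_iff] at hD0; exact hD0.1)
      have hu0' : 0 < lam.real u := ENNReal.toReal_pos hu0.ne' (measure_ne_top _ _)
      have hult' : lam.real u < lam.real D :=
        (ENNReal.toReal_lt_toReal (measure_ne_top _ _) (measure_ne_top _ _)).2 hult
      have hdiff : lam.real (D \ u) = lam.real D - lam.real u := measureReal_sdiff huD hu
      have hpow : lam.real s * (1 / 2) ^ (n + 1) = lam.real s * (1 / 2) ^ n / 2 := by ring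
      -- one of the two halves of `D` has at most half of its mass
      rcases le_total (lam.real u) (lam.real D / 2) with hle | hle
      · exact ⟨u, huD.trans hDs, hu, hu0', by linarith⟩
      · exact ⟨D \ u, sdiff_subset.trans hDs, hD.diff hu, by linarith, by linarith⟩
  have hlim : Tendsto (fun n : ℕ => lam.real s * (1 / 2 : ℝ) ^ n) atTop (𝓝 0) := by
    simpa using (tendsto_pow_atTop_nhds_zero_of_lt_one (r := (1 / 2 : ℝ)) (by norm_num)
      (by norm_num)).const_mul (lam.real s)
  obtain ⟨n, hn⟩ := (hlim.eventually_lt_const hε).exists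
  obtain ⟨D, h1, h2, h3, h4⟩ := key n
  exact ⟨D, h1, h2, h3, h4.trans_lt hn⟩

/-- Exhaustion principle: a property stable under infima of decreasing sequences has, below any
element satisfying it, an element satisfying it that cannot be lowered within the property so as to
decrease the weight `w`. No continuity of `w` is needed. -/
lemma exists_minimal_of_iInf {α : Type*} [CompleteLattice α] {w : α → ℝ≥0∞} (hw : Monotone w)
    (hfin : ∀ a, w a ≠ ∞) {P : α → Prop}
    (hP : ∀ u : ℕ → α, Antitone u → (∀ n, P (u n)) → P (⨅ n, u n)) {a : α} (ha : P a) :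
    ∃ b ≤ a, P b ∧ ∀ c ≤ b, P c → w b ≤ w c := by
  have step : ∀ (n : ℕ) (b : {b // P b}), ∃ c : {b // P b}, c.1 ≤ b.1 ∧
      ∀ d ≤ b.1, P d → w c.1 ≤ w d + (n : ℝ≥0∞)⁻¹ := by
    intro n b
    set m : ℝ≥0∞ := ⨅ d : {d // d ≤ b.1 ∧ P d}, w d.1 with hm
    have hmfin : m ≠ ∞ :=
      ne_top_of_le_ne_top (hfin b.1) (iInf_le_of_le ⟨b.1, le_rfl, b.2⟩ le_rfl)
    have hlt : m < m + (n : ℝ≥0∞)⁻¹ := ENNReal.lt_add_right hmfin (by simp)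
    obtain ⟨c, hc⟩ := iInf_lt_iff.1 (hm ▸ hlt)
    refine ⟨⟨c.1, c.2.2⟩, c.2.1, fun d hd hPd => hc.le.trans ?_⟩
    gcongr
    exact iInf_le_of_le ⟨d, hd, hPd⟩ le_rfl
  -- iterate almost optimal choices with errors `1 / n`, starting from `a`
  choose nxt hle hnear using step
  let v : ℕ → {b // P b} := fun n => Nat.rec ⟨a, ha⟩ (fun n b => nxt n b) n
  have hv : Antitone fun n => (v n).1 := antitone_nat_of_succ_le fun n => hle n (v n)
  refine ⟨⨅ n, (v n).1, iInf_le _ 0, hP _ hv fun n => (v n).2, fun c hc hPc => ?_⟩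
  have hbound : ∀ n : ℕ, w (⨅ n, (v n).1) ≤ w c + (n : ℝ≥0∞)⁻¹ := fun n =>
    (hw (iInf_le _ (n + 1))).trans (hnear n (v n) c (hc.trans (iInf_le _ n)) hPc)
  have hlim : Tendsto (fun n : ℕ => w c + (n : ℝ≥0∞)⁻¹) atTop (𝓝 (w c + 0)) :=
    tendsto_const_nhds.add ENNReal.tendsto_inv_nat_nhds_zero
  rw [add_zero] at hlim
  exact ge_of_tendsto' hlim hbound

/-- If Hall's condition holds and `A y₀` has more mass than its demand `p y₀`, then a non-null piece
of `A y₀` can be removed without destroying Hall's condition. Only the index sets containing `y₀`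
are affected; they are written as `insert y₀ I` with `y₀ ∉ I`. -/
lemma exists_removable {T Y : Type*} [MeasurableSpace T] {lam : Measure T}
    [IsFiniteMeasure lam] (hatomless : AtomlessMeasure lam) {A : Y → Set T}
    (hA : ∀ y, MeasurableSet (A y)) {p : Y → ℝ}
    (hall : ∀ I : Finset Y, ∑ i ∈ I, p i ≤ lam.real (⋃ i ∈ I, A i)) {y₀ : Y}
    (hp : 0 ≤ p y₀) (hy₀ : p y₀ < lam.real (A y₀)) :
    ∃ D ⊆ A y₀, MeasurableSet D ∧ 0 < lam.real D ∧ ∀ I : Finset Y, y₀ ∉ I →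
      p y₀ + ∑ i ∈ I, p i ≤ lam.real ((A y₀ \ D) ∪ ⋃ i ∈ I, A i) := by
  classical
  set U : Finset Y → Set T := fun I => ⋃ i ∈ I, A i with hU
  have hUm : ∀ I, MeasurableSet (U I) := fun I => Finset.measurableSet_biUnion I fun i _ => hA i
  have hUmono : ∀ {I J : Finset Y}, I ⊆ J → U I ⊆ U J := fun h =>
    biUnion_subset_biUnion_left h
  have hUunion : ∀ I J : Finset Y, U (I ∪ J) = U I ∪ U J := fun I J => by
    simp [hU, Finset.set_biUnion_union]
  -- the slack of Hall's condition at `insert y₀ I`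
  set t : Finset Y → ℝ := fun I => lam.real (A y₀ ∪ U I) - p y₀ - ∑ i ∈ I, p i with ht
  have ht0 : ∀ I, y₀ ∉ I → 0 ≤ t I := fun I hI => by
    have := hall (insert y₀ I)
    rw [Finset.sum_insert hI, Finset.set_biUnion_insert] at this
    simp only [ht, hU]; linarith
  have hsub : ∀ I J, y₀ ∉ I → y₀ ∉ J → t (I ∩ J) ≤ t I + t J := fun I J hI hJ => by
    have h1 := ht0 (I ∪ J) (by simp [hI, hJ])
    have h2 := measureReal_union_add_inter (μ := lam) (s := A y₀ ∪ U I)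
      ((hA y₀).union (hUm J))
    have h3 : lam.real (A y₀ ∪ U (I ∩ J)) ≤ lam.real ((A y₀ ∪ U I) ∩ (A y₀ ∪ U J)) :=
      measureReal_mono (subset_inter
        (union_subset_union_right _ (hUmono Finset.inter_subset_left))
        (union_subset_union_right _ (hUmono Finset.inter_subset_right)))
    have h4 : (A y₀ ∪ U I) ∪ (A y₀ ∪ U J) = A y₀ ∪ U (I ∪ J) := by
      rw [hUunion, ← union_union_distrib_left]
    have h5 := Finset.sum_union_inter (s₁ := I) (s₂ := J) (f := p)
    rw [h4] at h2
    simp only [ht] at h1 ⊢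
    linarith
  have htempty : t ∅ = lam.real (A y₀) - p y₀ := by simp [ht, hU]
  by_contra! hcon
  -- a non-null `D` that cannot be removed violates the inequality `lam (D \ U I) ≤ t I` for some `I`
  have hbad : ∀ D ⊆ A y₀, MeasurableSet D → 0 < lam.real D →
      ∃ I, y₀ ∉ I ∧ t I < lam.real (D \ U I) := by
    intro D hD hDm hD0
    obtain ⟨I, hI, hlt⟩ := hcon D hD hDm hD0
    refine ⟨I, hI, ?_⟩
    have h1 : lam.real (A y₀ ∪ U I) ≤ lam.real ((A y₀ \ D) ∪ U I) + lam.real (D \ U I) := by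
      refine (measureReal_mono ?_).trans (measureReal_union_le _ _)
      intro x hx
      by_cases hxU : x ∈ U I
      · exact Or.inl (Or.inr hxU)
      · by_cases hxD : x ∈ D
        · exact Or.inr ⟨hxD, hxU⟩
        · exact Or.inl (Or.inl ⟨hx.resolve_right hxU, hxD⟩)
    simp only [ht]
    linarith
  -- Descent on `K`: if `(D, K)` violates the inequality with `lam D < t ∅`, then `A y₀ ∩ U K` is
  -- non-null, and a small piece `D'` of it, violating with `J`, combines with `D` by submodularity
  -- to a violation `(D ∪ D', K ∩ J)`, where `K ∩ J` is strictly smaller since `D' ⊆ U K`.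
  have key : ∀ (n : ℕ) (K : Finset Y), K.card = n → y₀ ∉ K → ∀ D ⊆ A y₀, MeasurableSet D →
      lam.real D < t ∅ → lam.real (D \ U K) ≤ t K := by
    intro n
    induction n using Nat.strong_induction_on with
    | _ n ih =>
      intro K hKn hK D hD hDm hDt
      by_contra! hviol
      have h1 : lam.real (D \ U K) ≤ lam.real D := measureReal_mono sdiff_subset
      have h2 := measureReal_union_add_inter (μ := lam) (s := A y₀) (hUm K)
        (measure_ne_top _ _) (measure_ne_top _ _)
      have h3 : ∑ i ∈ K, p i ≤ lam.real (U K) := hall K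
      have h4 : t K = lam.real (A y₀ ∪ U K) - p y₀ - ∑ i ∈ K, p i := rfl
      have hpos : 0 < lam.real (A y₀ ∩ U K) := by linarith
      obtain ⟨D', hD'A, hD'm, hD'0, hD'lt⟩ := hatomless.exists_small_s12 ((hA y₀).inter (hUm K)) hpos
        (sub_pos.2 hDt)
      obtain ⟨J, hJ, hJviol⟩ := hbad D' (hD'A.trans inter_subset_left) hD'm hD'0
      have hssub : K ∩ J ⊂ K := by
        refine Finset.ssubset_iff_subset_ne.2 ⟨Finset.inter_subset_left, fun heq => ?_⟩
        have : D' \ U J = ∅ := sdiff_eq_empty.2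
          ((hD'A.trans inter_subset_right).trans (hUmono (Finset.inter_eq_left.1 heq)))
        rw [this, measureReal_empty] at hJviol
        exact absurd (ht0 J hJ) hJviol.not_ge
      have h5 := ih _ (hKn ▸ Finset.card_lt_card hssub) (K ∩ J) rfl
        (fun h => hK (Finset.mem_inter.1 h).1) (D ∪ D')
        (union_subset hD (hD'A.trans inter_subset_left)) (hDm.union hD'm)
        ((measureReal_union_le _ _).trans_lt (by linarith))
      have h6 : lam.real (D \ U K) + lam.real (D' \ U J) ≤
          lam.real ((D ∪ D') \ U (K ∩ J)) := by
        rw [← measureReal_union _ (hD'm.diff (hUm J))]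
        · refine measureReal_mono (union_subset ?_ ?_)
          · exact sdiff_subset_sdiff subset_union_left (hUmono Finset.inter_subset_left)
          · exact sdiff_subset_sdiff subset_union_right (hUmono Finset.inter_subset_right)
        · exact disjoint_left.2 fun x hx hx' => hx.2 (hD'A hx'.1).2
      linarith [hsub K J hK hJ]
  obtain ⟨D, hD, hDm, hD0, hDlt⟩ := hatomless.exists_small_s12 (hA y₀) (ε := t ∅)
    (hp.trans_lt hy₀)
    (by rw [htempty]; linarith)
  obtain ⟨I, hI, hlt⟩ := hbad D hD hDm hD0
  exact absurd (key _ I rfl hI D hD hDm hDlt) hlt.not_ge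

/-- A family satisfying Hall's condition can be shrunk, preserving the condition, until each set has
exactly the demanded mass. -/
lemma exists_hall_shrink {T Y : Type*} [Countable Y] [MeasurableSpace T] {lam : Measure T}
    [IsFiniteMeasure lam] (hatomless : AtomlessMeasure lam) {A : Y → Set T}
    (hA : ∀ y, MeasurableSet (A y)) {p : Y → ℝ} (hp : ∀ y, 0 ≤ p y)
    (hall : ∀ I : Finset Y, ∑ i ∈ I, p i ≤ lam.real (⋃ i ∈ I, A i)) :
    ∃ B : Y → Set T, (∀ y, B y ⊆ A y) ∧ (∀ y, MeasurableSet (B y)) ∧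
      (∀ y, lam.real (B y) = p y) ∧
      ∀ I : Finset Y, ∑ i ∈ I, p i ≤ lam.real (⋃ i ∈ I, B i) := by
  classical
  obtain ⟨ε, hε0, hε⟩ := ENNReal.exists_pos_sum_of_countable (one_ne_zero (α := ℝ≥0∞)) Y
  -- a finite weight in which every coordinate counts strictly, so that minimality is coordinatewise
  let w : (Y → Set T) → ℝ≥0∞ := fun B => ∑' y, (ε y : ℝ≥0∞) * lam (B y)
  have hfin : ∀ B, w B ≠ ∞ := fun B => by
    have h1 : w B ≤ (∑' y, (ε y : ℝ≥0∞)) * lam univ := by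
      rw [← ENNReal.tsum_mul_right]
      exact ENNReal.tsum_le_tsum fun y => by gcongr; exact subset_univ _
    exact ne_top_of_le_ne_top (ENNReal.mul_ne_top (hε.trans ENNReal.one_lt_top).ne
      (measure_ne_top _ _)) h1
  have hmono : Monotone w := fun B C h => ENNReal.tsum_le_tsum fun y => by gcongr; exact h y
  let P : (Y → Set T) → Prop := fun B => (∀ y, MeasurableSet (B y)) ∧
    ∀ I : Finset Y, ∑ i ∈ I, p i ≤ lam.real (⋃ i ∈ I, B i)
  have hP : ∀ u : ℕ → (Y → Set T), Antitone u → (∀ n, P (u n)) → P (⨅ n, u n) := by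
    intro u hu hPu
    have happ : ∀ y, (⨅ n, u n) y = ⋂ n, u n y := fun y => by
      rw [iInf_apply]; rfl
    refine ⟨fun y => happ y ▸ MeasurableSet.iInter fun n => (hPu n).1 y, fun I => ?_⟩
    have hsub : ⋂ n, ⋃ i ∈ I, u n i ⊆ ⋃ i ∈ I, (⨅ n, u n) i := by
      intro x hx
      by_contra! hcon
      have hex : ∀ i ∈ I, ∃ n, x ∉ u n i := by
        intro i hi
        by_contra! hall
        exact hcon (mem_biUnion hi (by rw [happ]; exact mem_iInter.2 hall))
      choose! N hN using hex
      obtain ⟨i, hi, hxi⟩ := mem_iUnion₂.1 (mem_iInter.1 hx (I.sup N))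
      exact hN i hi (hu (Finset.le_sup hi) i hxi)
    have hlim : Tendsto (lam ∘ fun n => ⋃ i ∈ I, u n i) atTop
        (𝓝 (lam (⋂ n, ⋃ i ∈ I, u n i))) :=
      tendsto_measure_iInter_atTop
        (fun n => (Finset.measurableSet_biUnion I fun i _ => (hPu n).1 i).nullMeasurableSet)
        (fun m n hmn => biUnion_mono subset_rfl fun i _ => hu hmn i)
        ⟨0, measure_ne_top _ _⟩
    have hlim' := (ENNReal.tendsto_toReal (measure_ne_top lam _)).comp hlim
    exact (ge_of_tendsto' hlim' fun n => (hPu n).2 I).trans (measureReal_mono hsub (measure_ne_top _ _))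
  obtain ⟨B, hBA, ⟨hBm, hBhall⟩, hBmin⟩ := exists_minimal_of_iInf hmono hfin hP
    (show P A from ⟨hA, hall⟩)
  refine ⟨B, hBA, hBm, fun y => ?_, hBhall⟩
  have hge : p y ≤ lam.real (B y) := by simpa using hBhall {y}
  by_contra hne
  obtain ⟨D, hD, hDm, hD0, hDhall⟩ := exists_removable hatomless hBm hBhall (hp y)
    (lt_of_le_of_ne hge (Ne.symm hne))
  set C : Y → Set T := Function.update B y (B y \ D) with hC
  have hCy : C y = B y \ D := Function.update_self ..
  have hCne : ∀ z, z ≠ y → C z = B z := fun z hz => Function.update_of_ne hz ..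
  have hCB : C ≤ B := fun z => by
    by_cases hz : z = y
    · subst hz; rw [hCy]; exact sdiff_subset
    · rw [hCne z hz]
  have hCP : P C := by
    refine ⟨fun z => ?_, fun I => ?_⟩
    · by_cases hz : z = y
      · subst hz; rw [hCy]; exact (hBm z).diff hDm
      · rw [hCne z hz]; exact hBm z
    · have hcongr : ∀ J : Finset Y, y ∉ J → ⋃ i ∈ J, C i = ⋃ i ∈ J, B i := fun J hJ =>
        iUnion₂_congr fun i hi => hCne i fun h => hJ (h ▸ hi)
      by_cases hy : y ∈ I
      · rw [← Finset.insert_erase hy, Finset.sum_insert (Finset.notMem_erase y I),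
          Finset.set_biUnion_insert, hCy, hcongr _ (Finset.notMem_erase y I)]
        exact hDhall _ (Finset.notMem_erase y I)
      · rw [hcongr I hy]; exact hBhall I
  have hlt : lam (C y) < lam (B y) := by
    rw [hCy, ← ENNReal.toReal_lt_toReal (measure_ne_top _ _) (measure_ne_top _ _)]
    have := measureReal_sdiff (μ := lam) hD hDm
    simp only [Measure.real] at this hD0
    linarith
  refine (hBmin C hCB hCP).not_gt ?_
  refine ENNReal.tsum_lt_tsum (hfin C) (fun z => by gcongr; exact hCB z) (i := y) ?_
  exact ENNReal.mul_lt_mul_right (by simpa using (hε0 y).ne') (by simp) hlt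

/-- **Marriage theorem of Bollobás and Varopoulos**, for demands of total mass one: Hall's condition
on finite sets suffices for a probability measure `ν` on a countable space to be the law of a
measurable map `f` with `t ∈ A (f t)` almost everywhere. -/
theorem exists_measurable_selection_of_hall {T Y : Type*} [Countable Y] [MeasurableSpace Y]
    [MeasurableSingletonClass Y] [MeasurableSpace T] {lam : Measure T} [IsProbabilityMeasure lam]
    (hatomless : AtomlessMeasure lam) {A : Y → Set T} (hA : ∀ y, MeasurableSet (A y))
    {ν : Measure Y} [IsProbabilityMeasure ν]
    (hall : ∀ I : Finset Y, ν (I : Set Y) ≤ lam (⋃ i ∈ I, A i)) :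
    ∃ f : T → Y, Measurable f ∧ (∀ᵐ t ∂lam, t ∈ A (f t)) ∧ ν = lam.map f := by
  classical
  have hsum : ∀ I : Finset Y, ∑ i ∈ I, ν.real {i} = ν.real (I : Set Y) := fun I =>
    sum_measureReal_singleton I
  obtain ⟨B, hBA, hBm, hBp, hBhall⟩ := exists_hall_shrink hatomless hA
    (p := fun y => ν.real {y}) (fun y => measureReal_nonneg) fun I => by
      rw [hsum]
      exact ENNReal.toReal_mono (measure_ne_top _ _) (hall I)
  have hBν : ∀ y, lam (B y) = ν {y} := fun y =>
    (ENNReal.toReal_eq_toReal_iff' (measure_ne_top _ _) (measure_ne_top _ _)).1 (hBp y)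
  -- equality in Hall's condition at singletons forces disjointness up to null sets
  have hdisj : Pairwise (Function.onFun (AEDisjoint lam) B) := by
    intro i j hij
    have h1 := hBhall {i, j}
    have h2 := measureReal_union_add_inter (μ := lam) (s := B i) (hBm j)
      (measure_ne_top _ _) (measure_ne_top _ _)
    rw [Finset.sum_pair hij, ← hBp, ← hBp, Finset.set_biUnion_insert,
      Finset.set_biUnion_singleton] at h1
    have h3 : lam.real (B i ∩ B j) = 0 := le_antisymm (by linarith) measureReal_nonneg
    exact (measureReal_eq_zero_iff (measure_ne_top _ _)).1 h3
  have hcover : lam (⋃ y, B y)ᶜ = 0 := by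
    rw [prob_compl_eq_zero_iff (MeasurableSet.iUnion hBm),
      measure_iUnion₀ hdisj fun y => (hBm y).nullMeasurableSet]
    simp_rw [hBν]
    rw [← measure_iUnion (fun i j hij => by simpa using hij) fun y => measurableSet_singleton y,
      iUnion_of_singleton, measure_univ]
  -- outside the null set `N` the sets `B y` form a partition
  set N : Set T := (⋃ y, B y)ᶜ ∪ ⋃ i, ⋃ j, ⋃ _ : i ≠ j, B i ∩ B j with hN
  have hNm : MeasurableSet N := (MeasurableSet.iUnion hBm).compl.union
    (MeasurableSet.iUnion fun i => MeasurableSet.iUnion fun j => MeasurableSet.iUnion fun _ =>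
      (hBm i).inter (hBm j))
  have hN0 : lam N = 0 := by
    refine measure_union_null hcover ?_
    simp only [measure_iUnion_null_iff]
    exact fun i j hij => hdisj hij
  have hex : ∀ t, t ∉ N → ∃ y, t ∈ B y := fun t ht => by
    by_contra h
    exact ht (Or.inl (by simpa using h))
  have huniq : ∀ t, t ∉ N → ∀ y z, t ∈ B y → t ∈ B z → y = z := fun t ht y z hy hz => by
    by_contra hyz
    exact ht (Or.inr (by simp only [mem_iUnion]; exact ⟨y, z, hyz, hy, hz⟩))
  obtain ⟨y₀⟩ : Nonempty Y := nonempty_of_isProbabilityMeasure ν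
  let f : T → Y := fun t => if h : t ∈ N then y₀ else (hex t h).choose
  have hf : ∀ t, t ∉ N → t ∈ B (f t) := fun t ht => by
    simp only [f, dif_neg ht]; exact (hex t ht).choose_spec
  have hfN : ∀ t ∈ N, f t = y₀ := fun t ht => by simp only [f, dif_pos ht]
  have hpre : ∀ y, f ⁻¹' {y} = (B y \ N) ∪ (N ∩ {_t | y₀ = y}) := by
    intro y
    ext t
    by_cases ht : t ∈ N
    · simp [ht, hfN t ht]
    · simp only [mem_preimage, mem_singleton_iff, mem_union, Set.mem_sdiff, ht, not_false_eq_true,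
        and_true, mem_inter_iff, false_and, or_false]
      exact ⟨fun h => h ▸ hf t ht, fun h => huniq t ht _ _ (hf t ht) h⟩
  have hfm : Measurable f := measurable_to_countable' fun y => by
    rw [hpre]
    exact ((hBm y).diff hNm).union (hNm.inter (MeasurableSet.const _))
  have hae : ∀ᵐ t ∂lam, t ∉ N := measure_eq_zero_iff_ae_notMem.1 hN0
  refine ⟨f, hfm, hae.mono fun t ht => hBA _ (hf t ht), Measure.ext_of_singleton fun y => ?_⟩
  rw [Measure.map_apply hfm (measurableSet_singleton y), ← hBν]
  refine measure_congr ?_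
  filter_upwards [hae] with t ht
  refine propext ⟨fun h => huniq t ht _ _ (hf t ht) h, fun h => ?_⟩
  have : f t = y := h
  exact this ▸ hf t ht

/-! ### Laws of selections of a random set -/

lemma measurableSet_hits {T Y : Type*} [Countable Y] [MeasurableSpace T] {G : T → Set Y}
    (hG : ∀ y, MeasurableSet {t | y ∈ G t}) (S : Set Y) :
    MeasurableSet {t | (G t ∩ S).Nonempty} := by
  have : {t | (G t ∩ S).Nonempty} = ⋃ y ∈ S, {t | y ∈ G t} := by
    ext t
    simp [Set.Nonempty, and_comm]
  rw [this]
  exact MeasurableSet.biUnion S.to_countable fun y _ => hG y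

lemma measure_le_of_mem_distr {T Y : Type*} [MeasurableSpace T] [MeasurableSpace Y]
    [TopologicalSpace Y] {lam : Measure T} [IsProbabilityMeasure lam] {G : T → Set Y}
    {ν : ProbabilityMeasure Y} (hν : ν ∈ distrOfSelections lam G) {S : Set Y}
    (hS : MeasurableSet S) : (ν : Measure Y) S ≤ lam {t | (G t ∩ S).Nonempty} := by
  obtain ⟨f, hf, hfG, hfν⟩ := hν
  rw [hfν, Measure.map_apply hf hS]
  refine measure_mono_ae ?_
  filter_upwards [hfG] with t ht hfS
  exact ⟨f t, ht, hfS⟩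

/-- Laws of selections are exactly the probability measures satisfying Hall's condition. -/
theorem mem_distrOfSelections_iff {T Y : Type*} [Countable Y] [MeasurableSpace T]
    [MeasurableSpace Y] [TopologicalSpace Y] [MeasurableSingletonClass Y] {lam : Measure T}
    [IsProbabilityMeasure lam] (hatomless : AtomlessMeasure lam) {G : T → Set Y}
    (hG : ∀ y, MeasurableSet {t | y ∈ G t}) {ν : ProbabilityMeasure Y} :
    ν ∈ distrOfSelections lam G ↔
      ∀ I : Finset Y, (ν : Measure Y) I ≤ lam {t | (G t ∩ I).Nonempty} := by
  refine ⟨fun hν I => measure_le_of_mem_distr hν I.measurableSet, fun h => ?_⟩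
  refine exists_measurable_selection_of_hall hatomless hG fun I => (h I).trans_eq ?_
  congr 1
  ext t
  simp [Set.Nonempty, and_comm]

lemma distrOfSelections_nonempty {T Y : Type*} [Countable Y] [MeasurableSpace T]
    [MeasurableSpace Y] [TopologicalSpace Y] [MeasurableSingletonClass Y] {lam : Measure T}
    [IsProbabilityMeasure lam] {G : T → Set Y} (hG : ∀ y, MeasurableSet {t | y ∈ G t})
    (hne : ∀ t, (G t).Nonempty) : (distrOfSelections lam G).Nonempty := by
  -- select the least element of `G t` in a fixed enumeration of `Y`
  obtain ⟨g, hg⟩ := Countable.exists_injective_nat Y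
  have hex : ∀ t, ∃ y ∈ G t, ∀ z ∈ G t, g y ≤ g z := fun t => by
    obtain ⟨y, hy, hmin⟩ := WellFounded.has_min (InvImage.wf g Nat.lt_wfRel.wf) (G t) (hne t)
    exact ⟨y, hy, fun z hz => not_lt.1 (hmin z hz)⟩
  choose f hfG hfmin using hex
  have hfm : Measurable f := measurable_to_countable' fun y => by
    have : f ⁻¹' {y} = {t | y ∈ G t} \ {t | (G t ∩ {z | g z < g y}).Nonempty} := by
      ext t
      constructor
      · rintro rfl
        exact ⟨hfG t, fun ⟨z, hz, hlt⟩ => (hfmin t z hz).not_gt hlt⟩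
      · rintro ⟨hy, hno⟩
        refine hg (le_antisymm (hfmin t y hy) (not_lt.1 fun hlt => hno ⟨f t, hfG t, hlt⟩))
    rw [this]
    exact (hG y).diff (measurableSet_hits hG _)
  exact ⟨⟨lam.map f, Measure.isProbabilityMeasure_map hfm.aemeasurable⟩, f, hfm,
    Eventually.of_forall hfG, rfl⟩

/-- The laws of selections of a compact-valued random set `K` are tight: outside an event of
probability less than `ε`, the whole set `K t` lies in one fixed compact set. -/
lemma isTightMeasureSet_distrOfSelections {T Y : Type*} [Countable Y] [MeasurableSpace T]
    [MetricSpace Y] [CompleteSpace Y] [MeasurableSpace Y] [BorelSpace Y] {lam : Measure T}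
    [IsProbabilityMeasure lam] {K : T → Set Y} (hK : ∀ y, MeasurableSet {t | y ∈ K t})
    (hKc : ∀ t, IsCompact (K t)) :
    IsTightMeasureSet {(ν : Measure Y) | ν ∈ distrOfSelections lam K} := by
  rw [isTightMeasureSet_iff_exists_isCompact_measure_compl_le]
  intro ε hε
  rcases isEmpty_or_nonempty Y with hY | hY
  · exact ⟨∅, isCompact_empty, fun μ _ => by simp [univ_eq_empty_iff.2 hY]⟩
  obtain ⟨e, he⟩ := exists_surjective_nat Y
  -- `E m k` is the event that `K t` is not covered by the first `k + 1` balls of radius `1 / (m + 1)`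
  let W : ℕ → ℕ → Set Y := fun m k => ⋃ i ∈ Iic k, Metric.closedBall (e i) (1 / ((m : ℝ) + 1))
  have hr : ∀ m : ℕ, (0 : ℝ) < 1 / ((m : ℝ) + 1) := fun m => Nat.one_div_pos_of_nat
  let E : ℕ → ℕ → Set T := fun m k => {t | (K t ∩ (W m k)ᶜ).Nonempty}
  have hWmono : ∀ m, Monotone (W m) := fun m k l hkl =>
    biUnion_subset_biUnion_left (Iic_subset_Iic.2 hkl)
  have hE : ∀ m, Tendsto (fun k => lam (E m k)) atTop (𝓝 0) := by
    intro m
    have hempty : ⋂ k, E m k = ∅ := by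
      refine eq_empty_of_forall_notMem fun t ht => ?_
      obtain ⟨J, hJ⟩ := (hKc t).elim_finite_subcover
        (fun i => Metric.ball (e i) (1 / ((m : ℝ) + 1))) (fun i => Metric.isOpen_ball)
        (fun y _ => by
          obtain ⟨i, rfl⟩ := he y
          exact mem_iUnion.2 ⟨i, Metric.mem_ball_self (hr m)⟩)
      obtain ⟨y, hyK, hyW⟩ := mem_iInter.1 ht (J.sup id)
      obtain ⟨i, hi, hyi⟩ := mem_iUnion₂.1 (hJ hyK)
      exact hyW (mem_iUnion₂.2 ⟨i, Finset.le_sup (f := id) hi, Metric.ball_subset_closedBall hyi⟩)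
    have h := tendsto_measure_iInter_atTop (μ := lam) (s := E m)
      (fun k => (measurableSet_hits hK _).nullMeasurableSet)
      (fun k l hkl t ht => ht.mono
        (inter_subset_inter_right _ (compl_subset_compl.2 (hWmono m hkl))))
      ⟨0, measure_ne_top _ _⟩
    rwa [hempty, measure_empty] at h
  obtain ⟨δ, hδ0, hδ⟩ := ENNReal.exists_pos_sum_of_countable' hε.ne' ℕ
  choose k hk using fun m => ((hE m).eventually_lt_const (hδ0 m)).exists
  have hclosed : ∀ m, IsClosed (W m (k m)) := fun m =>
    (finite_Iic _).isClosed_biUnion fun i _ => Metric.isClosed_closedBall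
  refine ⟨⋂ m, W m (k m), TotallyBounded.isCompact_of_isClosed ?_ (isClosed_iInter hclosed), ?_⟩
  · refine Metric.totallyBounded_iff.2 fun r hr0 => ?_
    obtain ⟨m, hm⟩ := exists_nat_one_div_lt hr0
    refine ⟨e '' Iic (k m), (finite_Iic _).image _, fun y hy => ?_⟩
    obtain ⟨i, hi, hyi⟩ := mem_iUnion₂.1 (mem_iInter.1 hy m)
    exact mem_iUnion₂.2 ⟨e i, mem_image_of_mem _ hi, Metric.closedBall_subset_ball hm hyi⟩
  · rintro _ ⟨ν, hν, rfl⟩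
    refine (measure_le_of_mem_distr hν (isClosed_iInter hclosed).measurableSet.compl).trans ?_
    have hsub : {t | (K t ∩ (⋂ m, W m (k m))ᶜ).Nonempty} ⊆ ⋃ m, E m (k m) := by
      rintro t ⟨y, hyK, hy⟩
      rw [compl_iInter] at hy
      obtain ⟨m, hm⟩ := mem_iUnion.1 hy
      exact mem_iUnion.2 ⟨m, y, hyK, hm⟩
    calc lam _ ≤ lam (⋃ m, E m (k m)) := measure_mono hsub
      _ ≤ ∑' m, lam (E m (k m)) := measure_iUnion_le _
      _ ≤ ∑' m, δ m := ENNReal.tsum_le_tsum fun m => (hk m).le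
      _ ≤ ε := hδ.le

/-! ### Weak limits and upper semicontinuity -/

lemma UpperSemicontinuousCorr.isCompact_biUnion {X Z : Type*} [TopologicalSpace X]
    [TopologicalSpace Z] {G : X → Set Z} (hG : UpperSemicontinuousCorr G)
    (hGc : ∀ x, IsCompact (G x)) {S : Set X} (hS : IsCompact S) :
    IsCompact (⋃ x ∈ S, G x) := by
  classical
  refine isCompact_of_finite_subcover fun {ι} U hU hcov => ?_
  refine hS.induction_on (p := fun S' => ∃ J : Finset ι, ⋃ x ∈ S', G x ⊆ ⋃ i ∈ J, U i)
    ⟨∅, by simp⟩ ?_ ?_ ?_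
  · rintro A B hAB ⟨J, hJ⟩
    exact ⟨J, (biUnion_subset_biUnion_left hAB).trans hJ⟩
  · rintro A B ⟨J, hJ⟩ ⟨J', hJ'⟩
    refine ⟨J ∪ J', ?_⟩
    rw [biUnion_union, Finset.set_biUnion_union]
    exact union_subset_union hJ hJ'
  · intro x hx
    obtain ⟨J, hJ⟩ := (hGc x).elim_finite_subcover U hU
      ((subset_biUnion_of_mem (u := fun x => G x) hx).trans hcov)
    obtain ⟨V, hV, hxV, hVJ⟩ := hG x _ (isOpen_biUnion fun i (_ : i ∈ J) => hU i) hJ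
    exact ⟨V, mem_nhdsWithin_of_mem_nhds (hV.mem_nhds hxV), J, iUnion₂_subset hVJ⟩

/-- Sequential form of upper semicontinuity with compact values: along `u n → x`, laws of selections
of `F · (u n)` subconverge to the law of a selection of `F · x`. -/
lemma exists_subseq_tendsto_distr {T X Y : Type*} [MeasurableSpace T] [MetricSpace X]
    [MetricSpace Y] [Countable Y] [CompleteSpace Y] [MeasurableSpace Y] [BorelSpace Y]
    {lam : Measure T} [IsProbabilityMeasure lam] (hatomless : AtomlessMeasure lam)
    {F : T → X → Set Y} (hF : ∀ x y, MeasurableSet {t | y ∈ F t x})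
    (hcomp : ∀ t x, IsCompact (F t x))
    (husc : ∀ t : T, UpperSemicontinuousCorr (fun x => F t x)) {u : ℕ → X} {x : X}
    (hu : Tendsto u atTop (𝓝 x)) {ν : ℕ → ProbabilityMeasure Y}
    (hν : ∀ n, ν n ∈ distrOfSelections lam fun t => F t (u n)) :
    ∃ μ ∈ distrOfSelections lam fun t => F t x, ∃ φ : ℕ → ℕ, StrictMono φ ∧
      Tendsto (ν ∘ φ) atTop (𝓝 μ) := by
  have htight := isTightMeasureSet_distrOfSelections (lam := lam)
    (K := fun t => ⋃ z ∈ insert x (range u), F t z)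
    (fun y => by
      have : {t | y ∈ ⋃ z ∈ insert x (range u), F t z} =
          ⋃ z ∈ insert x (range u), {t | y ∈ F t z} := by ext t; simp
      rw [this]
      exact MeasurableSet.biUnion ((countable_range u).insert x) fun z _ => hF z y)
    (fun t => (husc t).isCompact_biUnion (hcomp t) hu.isCompact_insert_range)
  have hmem : ∀ n, ν n ∈ distrOfSelections lam fun t => ⋃ z ∈ insert x (range u), F t z := by
    intro n
    obtain ⟨f, hf, hfF, hfν⟩ := hν n
    refine ⟨f, hf, hfF.mono fun t ht => ?_, hfν⟩
    exact mem_iUnion₂.2 ⟨u n, mem_insert_of_mem _ (mem_range_self n), ht⟩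
  obtain ⟨μ, -, φ, hφ, hlim⟩ := (isCompact_closure_of_isTightMeasureSet htight).tendsto_subseq
    fun n => subset_closure (hmem n)
  refine ⟨μ, (mem_distrOfSelections_iff hatomless (hF x)).2 fun I => ?_, φ, hφ, hlim⟩
  have hux : Tendsto (u ∘ φ) atTop (𝓝 x) := hu.comp hφ.tendsto_atTop
  -- the bound for closed thickenings of `I`, where upper semicontinuity can be used
  have hthick : ∀ δ : ℝ, 0 < δ →
      (μ : Measure Y) I ≤ lam {t | (F t x ∩ Metric.cthickening δ (I : Set Y)).Nonempty} := by
    intro δ hδ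
    set C := Metric.cthickening δ (I : Set Y) with hC
    have hCc : IsClosed C := Metric.isClosed_cthickening
    -- `⋂ n, Z n` is the set of `t` for which `F t (u (φ m))` meets `C` for infinitely many `m`
    let Z : ℕ → Set T := fun n => ⋃ m ∈ Ici n, {t | (F t (u (φ m)) ∩ C).Nonempty}
    have hZanti : Antitone Z := fun m n hmn => biUnion_subset_biUnion_left (Ici_subset_Ici.2 hmn)
    have hZm : ∀ n, MeasurableSet (Z n) := fun n =>
      MeasurableSet.biUnion (to_countable _) fun m _ => measurableSet_hits (hF _) C
    have hZsub : ⋂ n, Z n ⊆ {t | (F t x ∩ C).Nonempty} := by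
      intro t ht
      by_contra hcon
      obtain ⟨V, hV, hxV, hVC⟩ := husc t x Cᶜ hCc.isOpen_compl fun y hy hyC => hcon ⟨y, hy, hyC⟩
      obtain ⟨N, hN⟩ := eventually_atTop.1 (hux.eventually (hV.mem_nhds hxV))
      obtain ⟨m, hm, y, hyF, hyC⟩ := mem_iUnion₂.1 (mem_iInter.1 ht N)
      exact hVC _ (hN m hm) hyF hyC
    have hZlim : Tendsto (fun n => lam (Z n)) atTop (𝓝 (lam (⋂ n, Z n))) :=
      tendsto_measure_iInter_atTop (fun n => (hZm n).nullMeasurableSet) hZanti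
        ⟨0, measure_ne_top _ _⟩
    calc (μ : Measure Y) I ≤ (μ : Measure Y) (Metric.thickening δ (I : Set Y)) :=
          measure_mono (Metric.self_subset_thickening hδ _)
      _ ≤ liminf (fun n => (ν (φ n) : Measure Y) (Metric.thickening δ (I : Set Y))) atTop :=
          ProbabilityMeasure.le_liminf_measure_open_of_tendsto hlim Metric.isOpen_thickening
      _ ≤ liminf (fun n => lam (Z n)) atTop := by
          refine liminf_le_liminf (Eventually.of_forall fun n => ?_)
          refine (measure_mono (Metric.thickening_subset_cthickening δ _)).trans
            ((measure_le_of_mem_distr (hν (φ n)) hCc.measurableSet).trans (measure_mono ?_))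
          exact subset_biUnion_of_mem (u := fun m => {t | (F t (u (φ m)) ∩ C).Nonempty})
            (mem_Ici.2 le_rfl)
      _ = lam (⋂ n, Z n) := hZlim.liminf_eq
      _ ≤ _ := measure_mono hZsub
  -- let the thickenings shrink to `I`
  let R : ℕ → Set T := fun n =>
    {t | (F t x ∩ Metric.cthickening (1 / ((n : ℝ) + 1)) (I : Set Y)).Nonempty}
  have hRanti : Antitone R := fun m n hmn t ht => ht.mono
    (inter_subset_inter_right _ (Metric.cthickening_mono (Nat.one_div_le_one_div hmn) _))
  have hRlim : Tendsto (fun n => lam (R n)) atTop (𝓝 (lam (⋂ n, R n))) :=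
    tendsto_measure_iInter_atTop (fun n => (measurableSet_hits (hF x) _).nullMeasurableSet)
      hRanti ⟨0, measure_ne_top _ _⟩
  refine (ge_of_tendsto' hRlim fun n => hthick _ Nat.one_div_pos_of_nat).trans (measure_mono ?_)
  intro t ht
  by_contra hcon
  obtain ⟨δ, hδ, hdis⟩ := (disjoint_iff_inter_eq_empty.2
    (not_nonempty_iff_eq_empty.1 hcon)).exists_cthickenings (hcomp t x) I.finite_toSet.isClosed
  obtain ⟨n, hn⟩ := exists_nat_one_div_lt hδ
  obtain ⟨y, hyF, hyI⟩ := mem_iInter.1 ht n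
  exact disjoint_left.1 hdis (Metric.self_subset_cthickening _ hyF)
    (Metric.cthickening_mono hn.le _ hyI)

theorem stmt_12 {T X Y : Type*} [MeasurableSpace T] [MetricSpace X]
    [MetricSpace Y] [Countable Y] [CompleteSpace Y] [MeasurableSpace Y] [BorelSpace Y]
    (lam : Measure T) [IsProbabilityMeasure lam] (hatomless : AtomlessMeasure lam)
    (F : T → X → Set Y)
    (hmeas : ∀ x : X, ∀ C : Set Y, IsClosed C → MeasurableSet {t : T | (F t x ∩ C).Nonempty})
    (hne : ∀ t x, (F t x).Nonempty)
    (hcomp : ∀ t x, IsCompact (F t x))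
    (husc : ∀ t : T, UpperSemicontinuousCorr (fun x => F t x))
    (H : T → Set Y) (hHcomp : ∀ t, IsCompact (H t))
    (hFH : ∀ t x, F t x ⊆ H t) :
    UpperSemicontinuousCorr (fun x => distrOfSelections lam (fun t => F t x)) ∧
      ∀ x : X,
        (distrOfSelections lam (fun t => F t x)).Nonempty ∧
        IsCompact (distrOfSelections lam (fun t => F t x)) ∧
        ∀ ν₁ ∈ distrOfSelections lam (fun t => F t x),
          ∀ ν₂ ∈ distrOfSelections lam (fun t => F t x),
            ∀ r : ℝ≥0, r ≤ 1 →
              ∃ ν ∈ distrOfSelections lam (fun t => F t x),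
                (ν : Measure Y) = r • (ν₁ : Measure Y) + (1 - r) • (ν₂ : Measure Y) := by
  have hF : ∀ x y, MeasurableSet {t | y ∈ F t x} := fun x y => by
    simpa using hmeas x {y} isClosed_singleton
  refine ⟨fun x V hV hxV => ?_, fun x => ⟨?_, ?_, ?_⟩⟩
  · by_contra! hcon
    have hex : ∀ n : ℕ, ∃ z ∈ Metric.ball x (1 / ((n : ℝ) + 1)),
        ¬ distrOfSelections lam (fun t => F t z) ⊆ V := fun n =>
      hcon _ Metric.isOpen_ball (Metric.mem_ball_self Nat.one_div_pos_of_nat)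
    choose u hu huV using hex
    choose ν hν hνV using fun n => not_subset.1 (huV n)
    have hux : Tendsto u atTop (𝓝 x) := tendsto_iff_dist_tendsto_zero.2
      (squeeze_zero (fun n => dist_nonneg) (fun n => (Metric.mem_ball.1 (hu n)).le)
        tendsto_one_div_add_atTop_nhds_zero_nat)
    obtain ⟨μ, hμ, φ, -, hlim⟩ := exists_subseq_tendsto_distr hatomless hF hcomp husc hux hν
    obtain ⟨n, hn⟩ := (hlim.eventually (hV.mem_nhds (hxV hμ))).exists
    exact hνV _ hn
  · exact distrOfSelections_nonempty (hF x) fun t => hne t x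
  · let := TopologicalSpace.metrizableSpaceMetric (ProbabilityMeasure Y)
    exact IsSeqCompact.isCompact fun ν hν =>
      exists_subseq_tendsto_distr hatomless hF hcomp husc tendsto_const_nhds hν
  · intro ν₁ hν₁ ν₂ hν₂ r hr
    have hr1 : (r : ℝ≥0∞) + ((1 - r : ℝ≥0) : ℝ≥0∞) = 1 := by
      rw [← ENNReal.coe_add, add_tsub_cancel_of_le hr, ENNReal.coe_one]
    have hprob : IsProbabilityMeasure (r • (ν₁ : Measure Y) + (1 - r) • (ν₂ : Measure Y)) :=
      ⟨by
        change (r : ℝ≥0∞) * (ν₁ : Measure Y) univ +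
          ((1 - r : ℝ≥0) : ℝ≥0∞) * (ν₂ : Measure Y) univ = 1
        rw [measure_univ, measure_univ, mul_one, mul_one, hr1]⟩
    refine ⟨⟨_, hprob⟩, (mem_distrOfSelections_iff hatomless (hF x)).2 fun I => ?_, rfl⟩
    have h1 := (mem_distrOfSelections_iff hatomless (hF x)).1 hν₁ I
    have h2 := (mem_distrOfSelections_iff hatomless (hF x)).1 hν₂ I
    calc (r • (ν₁ : Measure Y) + (1 - r) • (ν₂ : Measure Y)) I
        = r * (ν₁ : Measure Y) I + ((1 - r : ℝ≥0) : ℝ≥0∞) * (ν₂ : Measure Y) I := rfl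
      _ ≤ r * lam {t | (F t x ∩ I).Nonempty} +
          ((1 - r : ℝ≥0) : ℝ≥0∞) * lam {t | (F t x ∩ I).Nonempty} := by gcongr
      _ = lam {t | (F t x ∩ I).Nonempty} := by rw [← add_mul, hr1, one_mul]
end
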